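/- Let α ∈ (0,π), γ ∈ [0,π/2], B = (sin γ·cos(α/2), sin γ·sin(α/2), cos γ), and assume α·( 1/√3 + (√3/2)·sin²γ ) < Θ₀. Then for every τ* ∈ ℝ with s(B;α,τ*) = inf_{τ∈ℝ} s(B;α,τ), one has s(B;α,τ*) < s_ess(B;α,τ*); consequently s(B;α,τ*) is a discrete eigenvalue of the Neumann realization of the magnetic Schrödinger operator on the sector at τ = τ*. -/

import Mathlib

open Real MeasureTheory Set Filter

noncomputable section

namespace MagWedge

/-- The infinite sector `S_α := {(x₁,x₂) : |x₂| ≤ x₁·tan(α/2)}`. -/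
def sector (α : ℝ) : Set (ℝ × ℝ) :=
  {x | |x.2| ≤ x.1 * Real.tan (α / 2)}

/-- The infinite wedge `W_α := S_α × ℝ` (coordinates `(x₁, x₂, x₃)`). -/
def wedge (α : ℝ) : Set (ℝ × ℝ × ℝ) :=
  {x | |x.2.1| ≤ x.1 * Real.tan (α / 2)}

/-- The upper half-plane `Hp^up := {x₂ < x₁·tan(α/2)}`. -/
def hpUp (α : ℝ) : Set (ℝ × ℝ) :=
  {x | x.2 < x.1 * Real.tan (α / 2)}

/-- The lower half-plane `Hp^low := {x₂ > −x₁·tan(α/2)}`. -/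
def hpLow (α : ℝ) : Set (ℝ × ℝ) :=
  {x | -(x.1 * Real.tan (α / 2)) < x.2}

/-- The magnetic/electric energy of `u` on a planar domain `Ω`, for magnetic field
`(b₁,b₂,b₃)` (gauge `A̲ = (−x₂ b₃, 0)`) and Fourier parameter `τ`. -/
def energy2D (Ω : Set (ℝ × ℝ)) (b1 b2 b3 τ : ℝ) (u : ℝ × ℝ → ℂ) : ℝ :=
  ∫ x in Ω,
    ‖(-Complex.I) * fderiv ℝ u x (1, 0) + ((x.2 * b3 : ℝ) : ℂ) * u x‖ ^ 2
      + ‖fderiv ℝ u x (0, 1)‖ ^ 2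
      + (x.1 * b2 - x.2 * b1 - τ) ^ 2 * ‖u x‖ ^ 2

/-- The squared `L²`-norm of `u` on a planar domain `Ω`. -/
def norm2D (Ω : Set (ℝ × ℝ)) (u : ℝ × ℝ → ℂ) : ℝ := ∫ x in Ω, ‖u x‖ ^ 2

/-- The bottom of the spectrum of the Neumann realization of
`(−i∇−A̲)² + (x₁b₂−x₂b₁−τ)²` on `Ω`, via the Rayleigh quotient. -/
def specInf2D (Ω : Set (ℝ × ℝ)) (b1 b2 b3 τ : ℝ) : ℝ :=
  sInf { r : ℝ | ∃ u : ℝ × ℝ → ℂ, ContDiff ℝ (⊤ : ℕ∞) u ∧ HasCompactSupport u ∧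
    0 < norm2D Ω u ∧ r = energy2D Ω b1 b2 b3 τ u / norm2D Ω u }

/-- The band function `s(B;α,τ)` on the sector `S_α`. -/
def bandFn (α b1 b2 b3 τ : ℝ) : ℝ := specInf2D (sector α) b1 b2 b3 τ

/-- `Σ(B;α,τ,R)` : the Rayleigh quotient infimum over functions supported outside the
(closed Euclidean) ball of radius `R` centered at the origin. -/
def SigmaR (α b1 b2 b3 τ R : ℝ) : ℝ :=
  sInf { r : ℝ | ∃ u : ℝ × ℝ → ℂ, ContDiff ℝ (⊤ : ℕ∞) u ∧ HasCompactSupport u ∧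
    (tsupport u ⊆ {x : ℝ × ℝ | R ^ 2 < x.1 ^ 2 + x.2 ^ 2}) ∧
    0 < norm2D (sector α) u ∧
    r = energy2D (sector α) b1 b2 b3 τ u / norm2D (sector α) u }

/-- The bottom of the essential spectrum via Persson's characterization:
`s_ess(B;α,τ) = sup_{R>0} Σ(B;α,τ,R)`. -/
def sEss (α b1 b2 b3 τ : ℝ) : ℝ :=
  sSup { r : ℝ | ∃ R > (0 : ℝ), r = SigmaR α b1 b2 b3 τ R }

/-- The 3D magnetic energy on a domain `Ω ⊆ ℝ³` for the constant field `(b₁,b₂,b₃)`,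
in the gauge `A = (−x₂b₃, 0, x₂b₁ − x₁b₂)`. -/
def energy3D (Ω : Set (ℝ × ℝ × ℝ)) (b1 b2 b3 : ℝ) (u : ℝ × ℝ × ℝ → ℂ) : ℝ :=
  ∫ x in Ω,
    ‖(-Complex.I) * fderiv ℝ u x (1, 0, 0) + ((x.2.1 * b3 : ℝ) : ℂ) * u x‖ ^ 2
      + ‖fderiv ℝ u x (0, 1, 0)‖ ^ 2
      + ‖(-Complex.I) * fderiv ℝ u x (0, 0, 1) - ((x.2.1 * b1 : ℝ) : ℂ) * u x
          + ((x.1 * b2 : ℝ) : ℂ) * u x‖ ^ 2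

/-- The squared `L²`-norm of `u` on a domain `Ω ⊆ ℝ³`. -/
def norm3D (Ω : Set (ℝ × ℝ × ℝ)) (u : ℝ × ℝ × ℝ → ℂ) : ℝ := ∫ x in Ω, ‖u x‖ ^ 2

/-- `λ(B;W_α)` : the bottom of the spectrum of the Neumann magnetic Laplacian on the
wedge `W_α` with constant magnetic field `B = (b₁,b₂,b₃)`. -/
def lambdaWedge (α b1 b2 b3 : ℝ) : ℝ :=
  sInf { r : ℝ | ∃ u : ℝ × ℝ × ℝ → ℂ, ContDiff ℝ (⊤ : ℕ∞) u ∧ HasCompactSupport u ∧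
    0 < norm3D (wedge α) u ∧ r = energy3D (wedge α) b1 b2 b3 u / norm3D (wedge α) u }

/-- The de Gennes function `μ₁(ξ)`: bottom of the spectrum of the Neumann realization of
`−d²/dt² + (t−ξ)²` on the half-line. -/
def deGennes (ξ : ℝ) : ℝ :=
  sInf { r : ℝ | ∃ u : ℝ → ℂ, ContDiff ℝ (⊤ : ℕ∞) u ∧ HasCompactSupport u ∧
    (0 < ∫ t in Ioi (0 : ℝ), ‖u t‖ ^ 2) ∧
    r = (∫ t in Ioi (0 : ℝ), ‖deriv u t‖ ^ 2 + (t - ξ) ^ 2 * ‖u t‖ ^ 2) /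
        (∫ t in Ioi (0 : ℝ), ‖u t‖ ^ 2) }

/-- `Θ₀ := inf_ξ μ₁(ξ)`. -/
def Theta0 : ℝ := ⨅ ξ : ℝ, deGennes ξ

/-- The half-space `{(s,t,z) : t > 0}` in ℝ³. -/
def halfSpace3 : Set (ℝ × ℝ × ℝ) := {x | 0 < x.2.1}

/-- `σ(θ)` : the bottom of the spectrum of the Neumann magnetic Laplacian on the half-space
with a unit magnetic field making angle `θ` with the boundary. -/
def sigmaHS (θ : ℝ) : ℝ :=
  sInf { r : ℝ | ∃ u : ℝ × ℝ × ℝ → ℂ, ContDiff ℝ (⊤ : ℕ∞) u ∧ HasCompactSupport u ∧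
    (0 < ∫ x in halfSpace3, ‖u x‖ ^ 2) ∧
    r = (∫ x in halfSpace3,
          ‖fderiv ℝ u x (1, 0, 0)‖ ^ 2 + ‖fderiv ℝ u x (0, 1, 0)‖ ^ 2
            + ‖(-Complex.I) * fderiv ℝ u x (0, 0, 1)
                - ((x.2.1 * Real.cos θ : ℝ) : ℂ) * u x
                + ((x.1 * Real.sin θ : ℝ) : ℂ) * u x‖ ^ 2) /
        (∫ x in halfSpace3, ‖u x‖ ^ 2) }

/-- `μ(α)` : the bottom of the spectrum of the magnetic Neumann Laplacian on the sector
`S_α` with unit constant (scalar) magnetic field. -/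
def muSector (α : ℝ) : ℝ :=
  sInf { r : ℝ | ∃ u : ℝ × ℝ → ℂ, ContDiff ℝ (⊤ : ℕ∞) u ∧ HasCompactSupport u ∧
    0 < norm2D (sector α) u ∧
    r = (∫ x in sector α,
          ‖(-Complex.I) * fderiv ℝ u x (1, 0) + (x.2 : ℂ) * u x‖ ^ 2
            + ‖fderiv ℝ u x (0, 1)‖ ^ 2) / norm2D (sector α) u }

end MagWedge

/-!
The band function at `τ = 0` lies below `Θ₀`, and the essential spectrum above it:
`inf s ≤ s(0) ≤ α (1/√3 + (√3/2) sin² γ) < Θ₀ ≤ s_ess(τ)` for every `τ`.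

*Upper bound.* Test `s(0)` with a radial Gaussian whose square is `exp (-ρ |x|²)`. In polar
coordinates its energy factors, the angular integral is at most that of a quadratic polynomial
since `sin² y ≤ y²`, and the Rayleigh quotient is at most `ρ + α² (1 + 3 sin² γ) / (12 ρ)`; take
`ρ = (α/2) (1/√3 + (√3/2) sin² γ)`.

*Lower bound.* On a half-plane whose boundary is parallel to the tangential field, reflect the
boundary onto `{t = 0}` and apply a partial Fourier transform along it: fibrewise the operator
becomes the de Gennes operator plus a square, so it is bounded below by `Θ₀`. On the sector, cut off
with `sin² ϑ(x₂) + cos² ϑ(x₂) = 1`, where `ϑ` varies so slowly on `0 ≤ x₂ ≤ ℓ` that the localization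
error is at most `ε`. The piece supported in `x₂ ≥ 0` extends by zero to the half-plane bounded by
the upper edge. On the piece supported in `x₂ ≤ ℓ`, far from the vertex, the electric potential
`(sin γ · dist(x, upper edge) - τ)²` exceeds `Θ₀` if `sin γ ≠ 0`; otherwise the potential is
constant and the piece extends by zero to the half-plane bounded by the lower edge.
-/

namespace MagWedge

open scoped FourierTransform ContDiff

/-! ### Test functions -/

section TestFunction

variable {E E' F : Type*} [NormedAddCommGroup E] [NormedSpace ℝ E] [NormedAddCommGroup E']
  [NormedSpace ℝ E'] [NormedAddCommGroup F] [NormedSpace ℝ F] {u v : E → F}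

/-- Smooth functions of compact support, over which all the Rayleigh quotients range. -/
structure IsTestFunction (u : E → F) : Prop where
  contDiff : ContDiff ℝ ∞ u
  hasCompactSupport : HasCompactSupport u

namespace IsTestFunction

theorem continuous (hu : IsTestFunction u) : Continuous u := hu.contDiff.continuous

theorem differentiable (hu : IsTestFunction u) : Differentiable ℝ u :=
  hu.contDiff.differentiable (by simp)

theorem add (hu : IsTestFunction u) (hv : IsTestFunction v) :
    IsTestFunction fun x ↦ u x + v x :=
  ⟨hu.contDiff.add hv.contDiff, hu.hasCompactSupport.add hv.hasCompactSupport⟩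

theorem smul {𝕜 : Type*} [NormedRing 𝕜] [NormedAlgebra ℝ 𝕜] [Module 𝕜 F] [IsBoundedSMul 𝕜 F]
    [IsScalarTower ℝ 𝕜 F] (hu : IsTestFunction u) {χ : E → 𝕜} (hχ : ContDiff ℝ ∞ χ) :
    IsTestFunction fun x ↦ χ x • u x :=
  ⟨hχ.smul hu.contDiff, hu.hasCompactSupport.smul_left⟩

theorem comp_homeomorph (hu : IsTestFunction u) (e : E' ≃ₜ E) (he : ContDiff ℝ ∞ e) :
    IsTestFunction fun x ↦ u (e x) :=
  ⟨hu.contDiff.comp he, hu.hasCompactSupport.comp_homeomorph e⟩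

theorem fderiv_apply (hu : IsTestFunction u) (v : E) : IsTestFunction fun x ↦ fderiv ℝ u x v :=
  ⟨(hu.contDiff.fderiv_right (by simp)).clm_apply contDiff_const,
    hu.hasCompactSupport.fderiv_apply ℝ v⟩

theorem comp_prodMk_left {u : E × E' → F} (hu : IsTestFunction u) (y : E') :
    IsTestFunction fun x ↦ u (x, y) := by
  have hrange : range (fun x : E ↦ (x, y)) = univ ×ˢ {y} := by
    ext ⟨x, z⟩
    simp [eq_comm]
  exact ⟨hu.contDiff.comp (contDiff_prodMk_left y),
    hu.hasCompactSupport.comp_isClosedEmbedding ⟨isEmbedding_prodMkLeft y,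
      hrange ▸ isClosed_univ.prod isClosed_singleton⟩⟩

theorem integrable [MeasurableSpace E] [OpensMeasurableSpace E] {μ : Measure E}
    [IsFiniteMeasureOnCompacts μ] (hu : IsTestFunction u) : Integrable u μ :=
  hu.continuous.integrable_of_hasCompactSupport hu.hasCompactSupport

theorem integrable_norm_sq [MeasurableSpace E] [OpensMeasurableSpace E] {μ : Measure E}
    [IsFiniteMeasureOnCompacts μ] (hu : IsTestFunction u) : Integrable (fun x ↦ ‖u x‖ ^ 2) μ :=
  Continuous.integrable_of_hasCompactSupport (hu.continuous.norm.pow 2)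
    (hu.hasCompactSupport.norm.comp_left (g := (· ^ 2)) (by simp))

end IsTestFunction

end TestFunction

/-! ### The magnetic derivative -/

section MagneticDerivative

variable {E E' : Type*} [NormedAddCommGroup E] [NormedSpace ℝ E] [NormedAddCommGroup E']
  [NormedSpace ℝ E']

/-- The magnetic derivative `(∇ + iA)u`, which is `i` times the `(-i∇ + A)u` of the physics
convention, for a magnetic potential `A` viewed as a one-form. -/
def covDeriv (A : E → E →L[ℝ] ℝ) (u : E → ℂ) (x : E) : E →L[ℝ] ℂ :=
  fderiv ℝ u x + (A x).smulRight (Complex.I * u x)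

theorem covDeriv_apply (A : E → E →L[ℝ] ℝ) (u : E → ℂ) (x v : E) :
    covDeriv A u x v = fderiv ℝ u x v + A x v * (Complex.I * u x) := by
  simp [covDeriv]

theorem covDeriv_smul (A : E → E →L[ℝ] ℝ) {χ : E → ℝ} {u : E → ℂ} {x : E}
    (hχ : DifferentiableAt ℝ χ x) (hu : DifferentiableAt ℝ u x) :
    covDeriv A (fun y ↦ χ y • u y) x =
      χ x • covDeriv A u x + (fderiv ℝ χ x).smulRight (u x) := by
  ext v
  rw [covDeriv_apply, fderiv_fun_smul hχ hu]
  simp only [covDeriv_apply, add_apply, smul_apply, ContinuousLinearMap.smulRight_apply,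
    Complex.real_smul]
  ring

theorem covDeriv_gauge_comp {A : E → E →L[ℝ] ℝ} {B : E' → E' →L[ℝ] ℝ} {T : E → E'}
    {T' : E →L[ℝ] E'} {φ : E → ℝ} {φ' : E →L[ℝ] ℝ} {u : E' → ℂ} {x : E}
    (hT : HasFDerivAt T T' x) (hφ : HasFDerivAt φ φ' x) (hu : DifferentiableAt ℝ u (T x))
    (hAB : A x + φ' = (B (T x)).comp T') :
    covDeriv A (fun y ↦ Complex.exp (φ y * Complex.I) * u (T y)) x =
      Complex.exp (φ x * Complex.I) • (covDeriv B u (T x)).comp T' := by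
  have hexp : HasFDerivAt (fun y ↦ Complex.exp (φ y * Complex.I))
      (Complex.exp (φ x * Complex.I) • φ'.smulRight Complex.I) x :=
    ((Complex.ofRealCLM.hasFDerivAt.comp x hφ).mul_const Complex.I).cexp.congr_fderiv <| by
      ext v
      simp [mul_comm]
  ext v
  have hABv : (B (T x) (T' v) : ℂ) = A x v + φ' v := by
    rw [← Complex.ofReal_add]
    exact congrArg _ (DFunLike.congr_fun hAB v).symm
  have hcomp : HasFDerivAt (fun y ↦ u (T y)) ((fderiv ℝ u (T x)).comp T') x :=
    hu.hasFDerivAt.comp x hT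
  rw [covDeriv_apply, (hexp.fun_mul hcomp).fderiv]
  simp only [covDeriv_apply, add_apply, smul_apply, ContinuousLinearMap.comp_apply,
    ContinuousLinearMap.smulRight_apply, smul_eq_mul, Complex.real_smul, hABv]
  ring

end MagneticDerivative

/-! ### Planar energy densities -/

section HilbertSchmidt

variable {F : Type*} [NormedAddCommGroup F]

/-- The squared Hilbert–Schmidt norm of a linear map on the Euclidean plane. It is spelled out
because `ℝ × ℝ` carries the sup norm. -/
def hsNormSq [NormedSpace ℝ F] (L : ℝ × ℝ →L[ℝ] F) : ℝ := ‖L (1, 0)‖ ^ 2 + ‖L (0, 1)‖ ^ 2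

theorem hsNormSq_nonneg [NormedSpace ℝ F] (L : ℝ × ℝ →L[ℝ] F) : 0 ≤ hsNormSq L := by
  unfold hsNormSq
  positivity

theorem hsNormSq_le [NormedSpace ℝ F] (L : ℝ × ℝ →L[ℝ] F) : hsNormSq L ≤ 2 * ‖L‖ ^ 2 := by
  have h₁ : ‖L (1, 0)‖ ≤ ‖L‖ := by simpa [Prod.norm_def] using L.le_opNorm (1, 0)
  have h₂ : ‖L (0, 1)‖ ≤ ‖L‖ := by simpa [Prod.norm_def] using L.le_opNorm (0, 1)
  rw [hsNormSq, two_mul]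
  gcongr

theorem hsNormSq_smul {𝕜 : Type*} [NormedField 𝕜] [NormedSpace ℝ F] [NormedSpace 𝕜 F]
    [SMulCommClass ℝ 𝕜 F] (c : 𝕜) (L : ℝ × ℝ →L[ℝ] F) :
    hsNormSq (c • L) = ‖c‖ ^ 2 * hsNormSq L := by
  simp only [hsNormSq, smul_apply, norm_smul]
  ring

theorem hsNormSq_smulRight [NormedSpace ℝ F] (L : ℝ × ℝ →L[ℝ] ℝ) (z : F) :
    hsNormSq (L.smulRight z) = hsNormSq L * ‖z‖ ^ 2 := by
  simp only [hsNormSq, ContinuousLinearMap.smulRight_apply, norm_smul]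
  ring

theorem hsNormSq_add_le [NormedSpace ℝ F] (L M : ℝ × ℝ →L[ℝ] F) :
    hsNormSq (L + M) ≤ 2 * hsNormSq L + 2 * hsNormSq M := by
  have norm_add_sq_le (y z : F) : ‖y + z‖ ^ 2 ≤ 2 * ‖y‖ ^ 2 + 2 * ‖z‖ ^ 2 := by
    nlinarith [norm_add_le y z, norm_nonneg (y + z), sq_nonneg (‖y‖ - ‖z‖)]
  have h₁ := norm_add_sq_le (L (1, 0)) (M (1, 0))
  have h₂ := norm_add_sq_le (L (0, 1)) (M (0, 1))
  simp only [hsNormSq, add_apply]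
  linarith

theorem norm_sq_cos_smul_add_sin_smul [InnerProductSpace ℝ F] (θ : ℝ) (y z : F) :
    ‖cos θ • y + sin θ • z‖ ^ 2 + ‖sin θ • y - cos θ • z‖ ^ 2 = ‖y‖ ^ 2 + ‖z‖ ^ 2 := by
  rw [norm_add_sq_real, norm_sub_sq_real]
  simp only [norm_smul, mul_pow, norm_eq_abs, sq_abs, real_inner_smul_left, real_inner_smul_right]
  linear_combination (‖y‖ ^ 2 + ‖z‖ ^ 2) * sin_sq_add_cos_sq θ

end HilbertSchmidt

section EnergyDensity

variable {A B : ℝ × ℝ → ℝ × ℝ →L[ℝ] ℝ} {V : ℝ × ℝ → ℝ} {u : ℝ × ℝ → ℂ} {x : ℝ × ℝ}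

/-- The energy density of the magnetic Schrödinger operator `(-i∇ + A)² + V²`. -/
def energyDensity (A : ℝ × ℝ → ℝ × ℝ →L[ℝ] ℝ) (V : ℝ × ℝ → ℝ) (u : ℝ × ℝ → ℂ) (x : ℝ × ℝ) : ℝ :=
  hsNormSq (covDeriv A u x) + V x ^ 2 * ‖u x‖ ^ 2

theorem energyDensity_nonneg : 0 ≤ energyDensity A V u x :=
  add_nonneg (hsNormSq_nonneg _) (by positivity)

theorem energyDensity_congr {v : ℝ × ℝ → ℂ} (h : u =ᶠ[nhds x] v) :
    energyDensity A V u x = energyDensity A V v x := by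
  simp only [energyDensity, covDeriv, h.fderiv_eq, h.eq_of_nhds]

theorem energyDensity_eq_zero_of_notMem_tsupport (hx : x ∉ tsupport u) :
    energyDensity A V u x = 0 := by
  rw [energyDensity_congr (notMem_tsupport_iff_eventuallyEq.mp hx)]
  simp [energyDensity, covDeriv, hsNormSq]

theorem continuous_energyDensity (hA : Continuous A) (hV : Continuous V) (hu : ContDiff ℝ ∞ u) :
    Continuous (energyDensity A V u) := by
  have hDu : Continuous (fderiv ℝ u) := hu.continuous_fderiv (by simp)
  have hu := hu.continuous
  unfold energyDensity
  simp only [hsNormSq, covDeriv_apply]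
  fun_prop

theorem IsTestFunction.integrable_energyDensity (hA : Continuous A) (hV : Continuous V)
    (hu : IsTestFunction u) : Integrable (energyDensity A V u) :=
  (continuous_energyDensity hA hV hu.contDiff).integrable_of_hasCompactSupport <|
    hu.hasCompactSupport.mono' fun x hx ↦ by
      by_contra hx'
      exact hx (energyDensity_eq_zero_of_notMem_tsupport hx')

theorem energyDensity_gauge_comp {T : ℝ × ℝ → ℝ × ℝ} {T' : ℝ × ℝ →L[ℝ] ℝ × ℝ} {φ : ℝ × ℝ → ℝ}
    {φ' : ℝ × ℝ →L[ℝ] ℝ} (hT : HasFDerivAt T T' x) (hφ : HasFDerivAt φ φ' x)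
    (hu : DifferentiableAt ℝ u (T x)) (hAB : A x + φ' = (B (T x)).comp T')
    (hT' : ∀ L : ℝ × ℝ →L[ℝ] ℂ, hsNormSq (L.comp T') = hsNormSq L) :
    energyDensity A (fun y ↦ V (T y)) (fun y ↦ Complex.exp (φ y * Complex.I) * u (T y)) x =
      energyDensity B V u (T x) := by
  simp only [energyDensity, covDeriv_gauge_comp hT hφ hu hAB, hsNormSq_smul, hT', norm_mul,
    Complex.norm_exp_ofReal_mul_I, one_pow, one_mul]

theorem energyDensity_smul_le {χ : ℝ × ℝ → ℝ} (hχ : DifferentiableAt ℝ χ x)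
    (hu : DifferentiableAt ℝ u x) :
    energyDensity A V (fun y ↦ χ y • u y) x ≤
      2 * (χ x ^ 2 * energyDensity A V u x) + 2 * (hsNormSq (fderiv ℝ χ x) * ‖u x‖ ^ 2) := by
  have h := hsNormSq_add_le (χ x • covDeriv A u x) ((fderiv ℝ χ x).smulRight (u x))
  rw [hsNormSq_smul, hsNormSq_smulRight, norm_eq_abs, sq_abs] at h
  simp only [energyDensity, covDeriv_smul A hχ hu, norm_smul, mul_pow, norm_eq_abs, sq_abs]
  nlinarith [mul_nonneg (sq_nonneg (χ x)) (mul_nonneg (sq_nonneg (V x)) (sq_nonneg ‖u x‖))]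

/-- The IMS localization formula, for the partition of unity `(sin ϑ)² + (cos ϑ)² = 1`. -/
theorem energyDensity_sin_smul_add_cos_smul {ϑ : ℝ × ℝ → ℝ} (hϑ : DifferentiableAt ℝ ϑ x)
    (hu : DifferentiableAt ℝ u x) :
    energyDensity A V (fun y ↦ sin (ϑ y) • u y) x + energyDensity A V (fun y ↦ cos (ϑ y) • u y) x =
      energyDensity A V u x + hsNormSq (fderiv ℝ ϑ x) * ‖u x‖ ^ 2 := by
  have key (v : ℝ × ℝ) :
      ‖covDeriv A (fun y ↦ sin (ϑ y) • u y) x v‖ ^ 2 +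
          ‖covDeriv A (fun y ↦ cos (ϑ y) • u y) x v‖ ^ 2 =
        ‖covDeriv A u x v‖ ^ 2 + ‖fderiv ℝ ϑ x v‖ ^ 2 * ‖u x‖ ^ 2 := by
    have h := norm_sq_cos_smul_add_sin_smul (ϑ x) (fderiv ℝ ϑ x v • u x) (covDeriv A u x v)
    rw [← norm_neg (sin (ϑ x) • _ - _), norm_smul (fderiv ℝ ϑ x v), mul_pow] at h
    rw [covDeriv_smul A hϑ.sin hu, covDeriv_smul A hϑ.cos hu, hϑ.hasFDerivAt.sin.fderiv,
      hϑ.hasFDerivAt.cos.fderiv, add_comm (‖covDeriv A u x v‖ ^ 2), ← h]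
    congr 3 <;> simp [mul_assoc] <;> ring
  simp only [energyDensity, hsNormSq, norm_smul, mul_pow, norm_eq_abs, sq_abs] at key ⊢
  linear_combination key (1, 0) + key (0, 1) +
    V x ^ 2 * ‖u x‖ ^ 2 * sin_sq_add_cos_sq (ϑ x)

end EnergyDensity

/-! ### The Landau gauge -/

section Landau

/-- The Landau gauge `b x₂ dx₁`. -/
def landau (b : ℝ) (x : ℝ × ℝ) : ℝ × ℝ →L[ℝ] ℝ := (b * x.2) • ContinuousLinearMap.fst ℝ ℝ ℝ

theorem continuous_landau (b : ℝ) : Continuous (landau b) := by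
  unfold landau
  fun_prop

theorem hsNormSq_landau (b : ℝ) (x : ℝ × ℝ) : hsNormSq (landau b x) = (b * x.2) ^ 2 := by
  simp [hsNormSq, landau, mul_pow]

/-- The signed distance to the line through the origin of angle `φ`, positive on its right. -/
def lineDist (φ : ℝ) (x : ℝ × ℝ) : ℝ := sin φ * x.1 - cos φ * x.2

@[fun_prop]
theorem contDiff_lineDist (φ : ℝ) : ContDiff ℝ ∞ (lineDist φ) := by
  unfold lineDist
  fun_prop

theorem continuous_lineDist (φ : ℝ) : Continuous (lineDist φ) := (contDiff_lineDist φ).continuous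

theorem energy2D_eq_integral_energyDensity (Ω : Set (ℝ × ℝ)) (κ φ b τ : ℝ) (u : ℝ × ℝ → ℂ) :
    energy2D Ω (κ * cos φ) (κ * sin φ) b τ u =
      ∫ x in Ω, energyDensity (landau b) (fun y ↦ κ * lineDist φ y - τ) u x := by
  refine integral_congr_ae (.of_forall fun x ↦ ?_)
  have h : -Complex.I * fderiv ℝ u x (1, 0) + ((x.2 * b : ℝ) : ℂ) * u x =
      -Complex.I * covDeriv (landau b) u x (1, 0) := by
    simp [covDeriv_apply, landau]
    linear_combination (b * x.2 * u x : ℂ) * Complex.I_sq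
  simp only [h, energyDensity, hsNormSq, lineDist, norm_mul, norm_neg, Complex.norm_I, one_mul,
    covDeriv_apply _ _ _ ((0 : ℝ), (1 : ℝ)), landau, smul_apply, ContinuousLinearMap.coe_fst',
    smul_zero, Complex.ofReal_zero, zero_mul, add_zero]
  ring

theorem IsTestFunction.integrable_energyDensity_landau {u : ℝ × ℝ → ℂ} (hu : IsTestFunction u)
    (κ φ b τ : ℝ) : Integrable (energyDensity (landau b) (fun y ↦ κ * lineDist φ y - τ) u) :=
  hu.integrable_energyDensity (continuous_landau b)
    (((continuous_lineDist φ).const_mul κ).sub continuous_const)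

end Landau

/-! ### The de Gennes inequality on the half-line -/

theorem deGennes_nonneg (ξ : ℝ) : 0 ≤ deGennes ξ := by
  refine Real.sInf_nonneg ?_
  rintro _ ⟨u, -, -, hu, rfl⟩
  exact div_nonneg (integral_nonneg fun t ↦ by positivity) hu.le

theorem Theta0_nonneg : 0 ≤ Theta0 := Real.iInf_nonneg deGennes_nonneg

theorem Theta0_mul_integral_le {u : ℝ → ℂ} (hu : IsTestFunction u) (ξ : ℝ) :
    Theta0 * ∫ t in Ici (0 : ℝ), ‖u t‖ ^ 2 ≤
      ∫ t in Ici (0 : ℝ), ‖deriv u t‖ ^ 2 + (t - ξ) ^ 2 * ‖u t‖ ^ 2 := by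
  rw [integral_Ici_eq_integral_Ioi, integral_Ici_eq_integral_Ioi]
  have hN : 0 ≤ ∫ t in Ioi (0 : ℝ), ‖u t‖ ^ 2 := integral_nonneg fun t ↦ by positivity
  rcases hN.eq_or_lt with hN | hN
  · rw [← hN, mul_zero]
    exact integral_nonneg fun t ↦ by positivity
  · rw [← le_div_iff₀ hN]
    refine (ciInf_le ⟨0, forall_mem_range.mpr deGennes_nonneg⟩ ξ).trans (csInf_le ⟨0, ?_⟩
      ⟨u, hu.contDiff, hu.hasCompactSupport, hN, rfl⟩)
    rintro _ ⟨v, -, -, hv, rfl⟩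
    exact div_nonneg (integral_nonneg fun t ↦ by positivity) hv.le

/-! ### The partial Fourier transform -/

section PartialFourier

variable {w : ℝ × ℝ → ℂ}

theorem IsTestFunction.exists_integrable_bound {E E' F : Type*} [NormedAddCommGroup E]
    [NormedSpace ℝ E] [MeasurableSpace E] [OpensMeasurableSpace E] [NormedAddCommGroup E']
    [NormedSpace ℝ E'] [NormedAddCommGroup F] [NormedSpace ℝ F] {u : E × E' → F}
    (hu : IsTestFunction u) (μ : Measure E) [IsFiniteMeasureOnCompacts μ] :
    ∃ g : E → ℝ, Integrable g μ ∧ ∀ x y, ‖u (x, y)‖ ≤ g x := by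
  obtain ⟨M, hM⟩ := hu.continuous.bounded_above_of_compact_support hu.hasCompactSupport
  have hK : IsCompact (Prod.fst '' tsupport u) :=
    hu.hasCompactSupport.isCompact.image continuous_fst
  refine ⟨(Prod.fst '' tsupport u).indicator fun _ ↦ M,
    (integrable_indicator_iff hK.measurableSet).mpr (integrableOn_const hK.measure_ne_top), ?_⟩
  intro x y
  by_cases h : u (x, y) = 0
  · rw [h, norm_zero]
    exact indicator_nonneg (fun _ _ ↦ (norm_nonneg _).trans (hM 0)) _
  · rw [indicator_of_mem (mem_image_of_mem Prod.fst (subset_tsupport u h))]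
    exact hM _

/-- The Fourier transform of `w` in its first variable, at the value `t` of the second one. -/
def partialFourier (w : ℝ × ℝ → ℂ) (t ξ : ℝ) : ℂ := 𝓕 (fun s ↦ w (s, t)) ξ

theorem partialFourier_eq_integral (w : ℝ × ℝ → ℂ) (t ξ : ℝ) :
    partialFourier w t ξ = ∫ s, Complex.exp ((-2 * π * s * ξ : ℝ) * Complex.I) * w (s, t) := by
  rw [partialFourier, Real.fourier_real_eq_integral_exp_smul]
  simp

theorem partialFourier_mul_snd (g : ℝ → ℂ) (w : ℝ × ℝ → ℂ) (t ξ : ℝ) :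
    partialFourier (fun x ↦ g x.2 * w x) t ξ = g t * partialFourier w t ξ := by
  simp only [partialFourier_eq_integral, ← integral_const_mul]
  congr 1 with s
  ring

theorem IsTestFunction.integrable_exp_mul {f : ℝ → ℂ} (hf : IsTestFunction f) (ξ : ℝ) :
    Integrable fun s ↦ Complex.exp ((-2 * π * s * ξ : ℝ) * Complex.I) * f s :=
  (hf.smul ((Complex.ofRealCLM.contDiff.comp
    (by fun_prop : ContDiff ℝ ∞ fun s : ℝ ↦ -2 * π * s * ξ)).mul contDiff_const).cexp).integrable

theorem IsTestFunction.partialFourier_add {v : ℝ × ℝ → ℂ} (hv : IsTestFunction v)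
    (hw : IsTestFunction w) (t ξ : ℝ) :
    partialFourier (fun x ↦ v x + w x) t ξ = partialFourier v t ξ + partialFourier w t ξ := by
  simp only [partialFourier_eq_integral, mul_add]
  exact integral_add ((hv.comp_prodMk_left t).integrable_exp_mul ξ)
    ((hw.comp_prodMk_left t).integrable_exp_mul ξ)

theorem IsTestFunction.continuous_partialFourier (hw : IsTestFunction w) :
    Continuous fun p : ℝ × ℝ ↦ partialFourier w p.1 p.2 := by
  obtain ⟨g, hg, hwg⟩ := hw.exists_integrable_bound volume
  have hc := hw.continuous
  simp only [partialFourier_eq_integral]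
  refine continuous_of_dominated (fun p ↦ Continuous.aestronglyMeasurable (by fun_prop))
    (fun p ↦ .of_forall fun s ↦ ?_) hg (.of_forall fun s ↦ by fun_prop)
  rw [norm_mul, Complex.norm_exp_ofReal_mul_I, one_mul]
  exact hwg _ _

theorem hasDerivAt_comp_prodMk_right (hw : Differentiable ℝ w) (s t : ℝ) :
    HasDerivAt (fun t ↦ w (s, t)) (fderiv ℝ w (s, t) (0, 1)) t :=
  (hw (s, t)).hasFDerivAt.comp_hasDerivAt t ((hasDerivAt_const t s).prodMk (hasDerivAt_id t))

theorem hasDerivAt_comp_prodMk_left (hw : Differentiable ℝ w) (s t : ℝ) :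
    HasDerivAt (fun s ↦ w (s, t)) (fderiv ℝ w (s, t) (1, 0)) s :=
  (hw (s, t)).hasFDerivAt.comp_hasDerivAt s ((hasDerivAt_id s).prodMk (hasDerivAt_const s t))

theorem IsTestFunction.partialFourier_fderiv_fst (hw : IsTestFunction w) (t ξ : ℝ) :
    partialFourier (fun x ↦ fderiv ℝ w x (1, 0)) t ξ =
      (2 * π * Complex.I * ξ) * partialFourier w t ξ := by
  have hderiv : deriv (fun s ↦ w (s, t)) = fun s ↦ fderiv ℝ w (s, t) (1, 0) :=
    funext fun s ↦ (hasDerivAt_comp_prodMk_left hw.differentiable s t).deriv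
  have h := congrFun (Real.fourier_deriv (hw.comp_prodMk_left t).integrable
    (fun s ↦ (hasDerivAt_comp_prodMk_left hw.differentiable s t).differentiableAt)
    (hderiv ▸ ((hw.fderiv_apply (1, 0)).comp_prodMk_left t).integrable)) ξ
  rw [hderiv] at h
  simpa [partialFourier] using h

theorem IsTestFunction.hasDerivAt_partialFourier (hw : IsTestFunction w) (t ξ : ℝ) :
    HasDerivAt (partialFourier w · ξ) (partialFourier (fun x ↦ fderiv ℝ w x (0, 1)) t ξ) t := by
  obtain ⟨g, hg, hwg⟩ := (hw.fderiv_apply (0, 1)).exists_integrable_bound volume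
  have hc := hw.continuous
  have hc' := (hw.fderiv_apply (0, 1)).continuous
  simp only [partialFourier_eq_integral]
  refine (hasDerivAt_integral_of_dominated_loc_of_deriv_le (s := univ) univ_mem
    (F' := fun t s ↦ Complex.exp ((-2 * π * s * ξ : ℝ) * Complex.I) * fderiv ℝ w (s, t) (0, 1))
    (.of_forall fun t ↦ Continuous.aestronglyMeasurable (by fun_prop))
    ((hw.comp_prodMk_left t).integrable_exp_mul ξ)
    (Continuous.aestronglyMeasurable (by fun_prop)) (.of_forall fun s t _ ↦ ?_) hg
    (.of_forall fun s t _ ↦ (hasDerivAt_comp_prodMk_right hw.differentiable s t).const_mul _)).2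
  rw [norm_mul, Complex.norm_exp_ofReal_mul_I, one_mul]
  exact hwg _ _

theorem IsTestFunction.contDiff_partialFourier (hw : IsTestFunction w) (ξ : ℝ) (n : ℕ) :
    ContDiff ℝ n (partialFourier w · ξ) := by
  induction n generalizing w with
  | zero => exact contDiff_zero.mpr (hw.continuous_partialFourier.comp (.prodMk_left ξ))
  | succ n ih =>
    push_cast
    refine contDiff_succ_iff_deriv.mpr
      ⟨fun t ↦ (hw.hasDerivAt_partialFourier t ξ).differentiableAt, by simp, ?_⟩
    rw [funext fun t ↦ (hw.hasDerivAt_partialFourier t ξ).deriv]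
    exact ih (hw.fderiv_apply _)

theorem IsTestFunction.partialFourier_slice (hw : IsTestFunction w) (ξ : ℝ) :
    IsTestFunction (partialFourier w · ξ) := by
  refine ⟨contDiff_infty.mpr (hw.contDiff_partialFourier ξ),
    .intro (hw.hasCompactSupport.isCompact.image continuous_snd) fun t ht ↦ ?_⟩
  have hslice (s : ℝ) : w (s, t) = 0 :=
    image_eq_zero_of_notMem_tsupport fun hs ↦ ht (mem_image_of_mem Prod.snd hs)
  simp [partialFourier_eq_integral, hslice]

theorem IsTestFunction.integral_norm_sq_partialFourier (hw : IsTestFunction w) (t : ℝ) :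
    ∫ ξ, ‖partialFourier w t ξ‖ ^ 2 = ∫ s, ‖w (s, t)‖ ^ 2 := by
  have hs := hw.comp_prodMk_left t
  have h := (hs.hasCompactSupport.toSchwartzMap hs.contDiff).integral_norm_sq_fourier
  rwa [SchwartzMap.fourier_coe] at h

theorem IsTestFunction.integrable_norm_sq_partialFourier_slice (hw : IsTestFunction w) (t : ℝ) :
    Integrable fun ξ ↦ ‖partialFourier w t ξ‖ ^ 2 := by
  have hs := hw.comp_prodMk_left t
  simpa only [SchwartzMap.fourier_coe] using
    ((𝓕 (hs.hasCompactSupport.toSchwartzMap hs.contDiff)).memLp 2 volume).integrable_norm_pow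
      two_ne_zero

theorem volume_restrict_univ_prod (s : Set ℝ) :
    (volume : Measure (ℝ × ℝ)).restrict (univ ×ˢ s) = volume.prod (volume.restrict s) := by
  rw [Measure.volume_eq_prod, ← Measure.prod_restrict, Measure.restrict_univ]

theorem IsTestFunction.integrable_norm_sq_partialFourier (hw : IsTestFunction w) (s : Set ℝ) :
    Integrable (fun p : ℝ × ℝ ↦ ‖partialFourier w p.1 p.2‖ ^ 2)
      ((volume.restrict s).prod volume) := by
  refine (integrable_prod_iff
    (Continuous.aestronglyMeasurable (hw.continuous_partialFourier.norm.pow 2))).mpr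
    ⟨.of_forall hw.integrable_norm_sq_partialFourier_slice, ?_⟩
  simp only [Pi.pow_apply, norm_pow, norm_norm, hw.integral_norm_sq_partialFourier]
  have h := (hw.integrable_norm_sq (μ := volume)).restrict (s := univ ×ˢ s)
  rw [volume_restrict_univ_prod] at h
  exact h.integral_prod_right

theorem IsTestFunction.integral_integral_norm_sq_partialFourier (hw : IsTestFunction w)
    (s : Set ℝ) :
    ∫ ξ, ∫ t in s, ‖partialFourier w t ξ‖ ^ 2 = ∫ x in univ ×ˢ s, ‖w x‖ ^ 2 := by
  have h := (hw.integrable_norm_sq (μ := volume)).restrict (s := univ ×ˢ s)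
  rw [volume_restrict_univ_prod] at h
  rw [← integral_integral_swap (hw.integrable_norm_sq_partialFourier s),
    volume_restrict_univ_prod, integral_prod_symm _ h]
  simp only [hw.integral_norm_sq_partialFourier]

end PartialFourier

/-! ### Half-planes -/

section FlatHalfPlane

variable {w : ℝ × ℝ → ℂ}

theorem IsTestFunction.covDeriv_landau_fst (hw : IsTestFunction w) (b : ℝ) :
    IsTestFunction fun x ↦ covDeriv (landau b) w x (1, 0) := by
  have hc : ContDiff ℝ ∞ fun x : ℝ × ℝ ↦ (b * x.2) • Complex.I :=
    (by fun_prop : ContDiff ℝ ∞ fun x : ℝ × ℝ ↦ b * x.2).smul contDiff_const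
  convert (hw.fderiv_apply (1, 0)).add (hw.smul hc) using 2 with x
  simp [covDeriv_apply, landau, mul_assoc]

theorem IsTestFunction.partialFourier_covDeriv_landau_fst (hw : IsTestFunction w) (b t ξ : ℝ) :
    partialFourier (fun x ↦ covDeriv (landau b) w x (1, 0)) t ξ =
      Complex.I * ((2 * π * ξ + b * t : ℝ) * partialFourier w t ξ) := by
  have hc : ContDiff ℝ ∞ fun x : ℝ × ℝ ↦ (b * x.2) • Complex.I :=
    (by fun_prop : ContDiff ℝ ∞ fun x : ℝ × ℝ ↦ b * x.2).smul contDiff_const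
  have h := (hw.fderiv_apply (1, 0)).partialFourier_add (hw.smul hc) t ξ
  simp only [smul_eq_mul, partialFourier_mul_snd fun t : ℝ ↦ (b * t) • Complex.I,
    hw.partialFourier_fderiv_fst] at h
  convert h using 1
  · congr 1 with x
    simp [covDeriv_apply, landau, mul_assoc]
  · push_cast [Complex.real_smul]
    ring

theorem energyDensity_landau_neg_cos (γ τ : ℝ) (w : ℝ × ℝ → ℂ) (x : ℝ × ℝ) :
    energyDensity (landau (-cos γ)) (fun y ↦ sin γ * y.2 - τ) w x =
      ‖covDeriv (landau (-cos γ)) w x (1, 0)‖ ^ 2 + ‖fderiv ℝ w x (0, 1)‖ ^ 2 +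
        ‖(sin γ * x.2 - τ) • w x‖ ^ 2 := by
  rw [norm_smul, mul_pow, norm_eq_abs, sq_abs]
  simp [energyDensity, hsNormSq, covDeriv_apply _ _ _ ((0 : ℝ), (1 : ℝ)), landau]

theorem IsTestFunction.Theta0_mul_integral_partialFourier_le (hw : IsTestFunction w) (γ τ ξ : ℝ) :
    Theta0 * ∫ t in Ici (0 : ℝ), ‖partialFourier w t ξ‖ ^ 2 ≤
      ∫ t in Ici (0 : ℝ),
        ‖partialFourier (fun x ↦ covDeriv (landau (-cos γ)) w x (1, 0)) t ξ‖ ^ 2 +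
        ‖partialFourier (fun x ↦ fderiv ℝ w x (0, 1)) t ξ‖ ^ 2 +
        ‖partialFourier (fun x ↦ (sin γ * x.2 - τ) • w x) t ξ‖ ^ 2 := by
  have hV : ContDiff ℝ ∞ fun x : ℝ × ℝ ↦ sin γ * x.2 - τ := by fun_prop
  refine (Theta0_mul_integral_le (hw.partialFourier_slice ξ)
    (cos γ * (2 * π * ξ) + sin γ * τ)).trans (integral_mono_of_nonneg
      (.of_forall fun t ↦ by positivity)
      ((((hw.covDeriv_landau_fst _).partialFourier_slice ξ).integrable_norm_sq.add
        ((hw.fderiv_apply _).partialFourier_slice ξ).integrable_norm_sq).add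
        ((hw.smul hV).partialFourier_slice ξ).integrable_norm_sq).restrict
      (.of_forall fun t ↦ ?_))
  have hsquare : (2 * π * ξ + -cos γ * t) ^ 2 + (sin γ * t - τ) ^ 2 =
      (t - (cos γ * (2 * π * ξ) + sin γ * τ)) ^ 2 + (sin γ * (2 * π * ξ) - cos γ * τ) ^ 2 := by
    linear_combination (t ^ 2 - (2 * π * ξ) ^ 2 - τ ^ 2) * sin_sq_add_cos_sq γ
  simp only [Complex.real_smul, (hw.hasDerivAt_partialFourier t ξ).deriv,
    hw.partialFourier_covDeriv_landau_fst,
    partialFourier_mul_snd fun t : ℝ ↦ ((sin γ * t - τ : ℝ) : ℂ), norm_mul, Complex.norm_I,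
    one_mul, Complex.norm_real, norm_eq_abs, mul_pow, sq_abs]
  nlinarith [mul_nonneg (sq_nonneg (sin γ * (2 * π * ξ) - cos γ * τ))
    (sq_nonneg ‖partialFourier w t ξ‖)]

theorem integral_add_add {X : Type*} [MeasurableSpace X] {μ : Measure X} {f g h : X → ℝ}
    (hf : Integrable f μ) (hg : Integrable g μ) (hh : Integrable h μ) :
    ∫ x, f x + g x + h x ∂μ = ∫ x, f x ∂μ + ∫ x, g x ∂μ + ∫ x, h x ∂μ := by
  rw [← integral_add hf hg]
  exact integral_add (hf.add hg) hh

theorem Theta0_mul_integral_le_integral_flat (hw : IsTestFunction w) (γ τ : ℝ) :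
    Theta0 * ∫ x in univ ×ˢ Ici (0 : ℝ), ‖w x‖ ^ 2 ≤
      ∫ x in univ ×ˢ Ici (0 : ℝ),
        energyDensity (landau (-cos γ)) (fun y ↦ sin γ * y.2 - τ) w x := by
  have hV : ContDiff ℝ ∞ fun x : ℝ × ℝ ↦ sin γ * x.2 - τ := by fun_prop
  have h₁ := hw.covDeriv_landau_fst (-cos γ)
  have h₂ := hw.fderiv_apply (0, 1)
  have h₃ := hw.smul hV
  have hF {v : ℝ × ℝ → ℂ} (hv : IsTestFunction v) :=
    (hv.integrable_norm_sq_partialFourier (Ici 0)).integral_prod_right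
  have hFt {v : ℝ × ℝ → ℂ} (hv : IsTestFunction v) (ξ : ℝ) :=
    (hv.partialFourier_slice ξ).integrable_norm_sq.restrict (μ := volume) (s := Ici 0)
  have hL {v : ℝ × ℝ → ℂ} (hv : IsTestFunction v) :=
    hv.integrable_norm_sq.restrict (μ := volume) (s := univ ×ˢ Ici (0 : ℝ))
  simp only [energyDensity_landau_neg_cos]
  rw [integral_add_add (hL h₁) (hL h₂) (hL h₃), ← hw.integral_integral_norm_sq_partialFourier,
    ← h₁.integral_integral_norm_sq_partialFourier, ← h₂.integral_integral_norm_sq_partialFourier,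
    ← h₃.integral_integral_norm_sq_partialFourier, ← integral_add_add (hF h₁) (hF h₂) (hF h₃),
    ← integral_const_mul]
  refine integral_mono ((hF hw).const_mul _) (((hF h₁).add (hF h₂)).add (hF h₃)) fun ξ ↦ ?_
  exact (hw.Theta0_mul_integral_partialFourier_le γ τ ξ).trans_eq
    (integral_add_add (hFt h₁ ξ) (hFt h₂ ξ) (hFt h₃ ξ))

end FlatHalfPlane

section HalfPlane

variable {v : ℝ × ℝ → ℂ}

/-- The closed half-plane to the right of the line through the origin of angle `φ`. -/
def halfPlane (φ : ℝ) : Set (ℝ × ℝ) := {x | 0 ≤ lineDist φ x}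

theorem measurableSet_halfPlane (φ : ℝ) : MeasurableSet (halfPlane φ) :=
  (isClosed_le continuous_const (continuous_lineDist φ)).measurableSet

/-- The Euclidean reflection exchanging the horizontal axis and the line of angle `φ`. -/
def reflect (φ : ℝ) : (ℝ × ℝ) ≃L[ℝ] (ℝ × ℝ) :=
  let L : ℝ × ℝ →L[ℝ] ℝ × ℝ :=
    (cos φ • ContinuousLinearMap.fst ℝ ℝ ℝ + sin φ • ContinuousLinearMap.snd ℝ ℝ ℝ).prod
      (sin φ • ContinuousLinearMap.fst ℝ ℝ ℝ - cos φ • ContinuousLinearMap.snd ℝ ℝ ℝ)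
  have hL : Function.Involutive L := fun x ↦ by
    ext
    · simp [L]
      linear_combination x.1 * sin_sq_add_cos_sq φ
    · simp [L]
      linear_combination x.2 * sin_sq_add_cos_sq φ
  .equivOfInverse L L hL hL

theorem reflect_apply (φ : ℝ) (x : ℝ × ℝ) :
    reflect φ x = (cos φ * x.1 + sin φ * x.2, lineDist φ x) := rfl

theorem reflect_reflect (φ : ℝ) (x : ℝ × ℝ) : reflect φ (reflect φ x) = x :=
  (reflect φ).symm_apply_apply x

theorem lineDist_reflect (φ : ℝ) (x : ℝ × ℝ) : lineDist φ (reflect φ x) = x.2 :=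
  congrArg Prod.snd (reflect_reflect φ x)

theorem measurePreserving_of_involutive {E : Type*} [NormedAddCommGroup E] [NormedSpace ℝ E]
    [FiniteDimensional ℝ E] [MeasurableSpace E] [BorelSpace E] (μ : Measure E)
    [μ.IsAddHaarMeasure] {L : E →ₗ[ℝ] E} (hL : Function.Involutive L) :
    MeasurePreserving L μ μ := by
  have hdet : LinearMap.det L * LinearMap.det L = 1 := by
    rw [← LinearMap.det_comp, show L ∘ₗ L = LinearMap.id from LinearMap.ext hL, LinearMap.det_id]
  refine ⟨L.continuous_of_finiteDimensional.measurable, ?_⟩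
  rw [Measure.map_linearMap_addHaar_eq_smul_addHaar _ (left_ne_zero_of_mul_eq_one hdet), abs_inv,
    (abs_eq zero_le_one).mpr (mul_self_eq_one_iff.mp hdet)]
  simp

theorem setIntegral_halfPlane (φ : ℝ) (f : ℝ × ℝ → ℝ) :
    ∫ x in halfPlane φ, f x = ∫ x in univ ×ˢ Ici (0 : ℝ), f (reflect φ x) := by
  have hpre : univ ×ˢ Ici (0 : ℝ) = reflect φ ⁻¹' halfPlane φ := by
    ext x
    simp [halfPlane, lineDist_reflect]
  rw [hpre]
  exact ((measurePreserving_of_involutive volume (L := (reflect φ).toLinearEquiv.toLinearMap)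
    (reflect_reflect φ)).setIntegral_preimage_emb
      (reflect φ).toHomeomorph.measurableEmbedding f _).symm

theorem hsNormSq_comp_reflect {F : Type*} [NormedAddCommGroup F] [InnerProductSpace ℝ F] (φ : ℝ)
    (L : ℝ × ℝ →L[ℝ] F) : hsNormSq (L.comp (reflect φ : ℝ × ℝ →L[ℝ] ℝ × ℝ)) = hsNormSq L := by
  have hL (s t : ℝ) : L (s, t) = s • L (1, 0) + t • L (0, 1) := by
    rw [← map_smul, ← map_smul, ← map_add]
    simp
  simp only [hsNormSq, ContinuousLinearMap.comp_apply, ContinuousLinearEquiv.coe_coe,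
    reflect_apply, lineDist, mul_one, mul_zero, add_zero, zero_add, sub_zero, zero_sub]
  rw [hL (cos φ), hL (sin φ), neg_smul, ← sub_eq_add_neg, norm_sq_cos_smul_add_sin_smul]

/-- The phase gauging away the difference between `landau (-b)` and the pullback of `landau b`
under `reflect φ`. -/
def reflectPhase (b φ : ℝ) (x : ℝ × ℝ) : ℝ :=
  b * (sin φ * cos φ / 2 * x.1 ^ 2 + sin φ ^ 2 * (x.1 * x.2) - sin φ * cos φ / 2 * x.2 ^ 2)

theorem contDiff_reflectPhase (b φ : ℝ) : ContDiff ℝ ∞ (reflectPhase b φ) := by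
  unfold reflectPhase
  fun_prop

theorem landau_neg_add_fderiv_reflectPhase (b φ : ℝ) (x : ℝ × ℝ) :
    landau (-b) x + fderiv ℝ (reflectPhase b φ) x =
      (landau b (reflect φ x)).comp (reflect φ : ℝ × ℝ →L[ℝ] ℝ × ℝ) := by
  have h₁ : HasFDerivAt (Prod.fst : ℝ × ℝ → ℝ) (ContinuousLinearMap.fst ℝ ℝ ℝ) x := hasFDerivAt_fst
  have h₂ : HasFDerivAt (Prod.snd : ℝ × ℝ → ℝ) (ContinuousLinearMap.snd ℝ ℝ ℝ) x := hasFDerivAt_snd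
  have h : HasFDerivAt (reflectPhase b φ) _ x :=
    ((((h₁.pow 2).const_mul (sin φ * cos φ / 2)).add ((h₁.mul h₂).const_mul (sin φ ^ 2))).sub
      ((h₂.pow 2).const_mul (sin φ * cos φ / 2))).const_mul b
  rw [h.fderiv]
  refine ContinuousLinearMap.ext fun y ↦ ?_
  simp [landau, reflect_apply, lineDist]
  linear_combination b * x.2 * y.1 * sin_sq_add_cos_sq φ

theorem Theta0_mul_integral_le_integral_halfPlane (hv : IsTestFunction v) (γ φ τ : ℝ) :
    Theta0 * ∫ x in halfPlane φ, ‖v x‖ ^ 2 ≤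
      ∫ x in halfPlane φ,
        energyDensity (landau (cos γ)) (fun y ↦ sin γ * lineDist φ y - τ) v x := by
  have hphase := contDiff_reflectPhase (cos γ) φ
  have hw : IsTestFunction fun x ↦ Complex.exp (reflectPhase (cos γ) φ x * Complex.I) •
      v (reflect φ x) :=
    (hv.comp_homeomorph (reflect φ).toHomeomorph (reflect φ).contDiff).smul
      ((Complex.ofRealCLM.contDiff.comp hphase).mul contDiff_const).cexp
  have hdensity (x : ℝ × ℝ) := energyDensity_gauge_comp (A := landau (-cos γ))
    (V := fun y ↦ sin γ * lineDist φ y - τ) (reflect φ).hasFDerivAt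
    (hphase.differentiable (by simp) x).hasFDerivAt (hv.differentiable (reflect φ x))
    (landau_neg_add_fderiv_reflectPhase (cos γ) φ x) (hsNormSq_comp_reflect φ)
  have h := Theta0_mul_integral_le_integral_flat hw γ τ
  simpa only [setIntegral_halfPlane, lineDist_reflect, smul_eq_mul, norm_mul,
    Complex.norm_exp_ofReal_mul_I, one_mul, ← hdensity] using h

theorem Theta0_mul_norm2D_le_energy2D_of_subset_halfPlane (hv : IsTestFunction v) {γ φ τ : ℝ}
    {S : Set (ℝ × ℝ)} (hsub : S ⊆ halfPlane φ) (hsupp : tsupport v ∩ halfPlane φ ⊆ S) :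
    Theta0 * norm2D S v ≤ energy2D S (sin γ * cos φ) (sin γ * sin φ) (cos γ) τ v := by
  have hnull {x : ℝ × ℝ} (hx : x ∈ halfPlane φ \ S) : x ∉ tsupport v :=
    fun hxv ↦ hx.2 (hsupp ⟨hxv, hx.1⟩)
  have h := Theta0_mul_integral_le_integral_halfPlane hv γ φ τ
  have hnorm : ∀ x ∈ halfPlane φ \ S, ‖v x‖ ^ 2 = 0 := fun x hx ↦ by
    simp [image_eq_zero_of_notMem_tsupport (hnull hx)]
  rwa [setIntegral_eq_of_subset_of_forall_sdiff_eq_zero (measurableSet_halfPlane φ) hsub hnorm,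
    setIntegral_eq_of_subset_of_forall_sdiff_eq_zero (measurableSet_halfPlane φ) hsub fun x hx ↦
      energyDensity_eq_zero_of_notMem_tsupport (hnull hx),
    ← energy2D_eq_integral_energyDensity] at h

end HalfPlane

/-! ### Sectors -/

section Sector

variable {α ℓ R : ℝ} {x : ℝ × ℝ}

theorem measurableSet_sector (α : ℝ) : MeasurableSet (sector α) :=
  (isClosed_le (by fun_prop) (by fun_prop)).measurableSet

theorem cos_half_pos (hα : α ∈ Ioo 0 π) : 0 < cos (α / 2) :=
  cos_pos_of_mem_Ioo ⟨by linarith [hα.1, pi_pos], by linarith [hα.2]⟩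

theorem sin_half_pos (hα : α ∈ Ioo 0 π) : 0 < sin (α / 2) :=
  sin_pos_of_pos_of_lt_pi (by linarith [hα.1]) (by linarith [hα.1, hα.2])

theorem mem_sector_iff_cos_mul_abs_le (hα : α ∈ Ioo 0 π) :
    x ∈ sector α ↔ cos (α / 2) * |x.2| ≤ sin (α / 2) * x.1 := by
  rw [sector, mem_ofPred_eq, tan_eq_sin_div_cos, mul_div_assoc', le_div_iff₀ (cos_half_pos hα),
    mul_comm, mul_comm x.1]

theorem sector_eq_inter_halfPlane (hα : α ∈ Ioo 0 π) :
    sector α = halfPlane (α / 2) ∩ halfPlane (π - α / 2) := by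
  ext x
  have habs : cos (α / 2) * |x.2| = |cos (α / 2) * x.2| := by
    rw [abs_mul, abs_of_pos (cos_half_pos hα)]
  rw [mem_sector_iff_cos_mul_abs_le hα, habs, abs_le']
  simp only [halfPlane, lineDist, mem_inter_iff, mem_ofPred_eq, sin_pi_sub, cos_pi_sub]
  constructor <;> rintro ⟨h₁, h₂⟩ <;> constructor <;> linarith

theorem mem_sector_of_snd_nonneg (hα : α ∈ Ioo 0 π) (hx : x ∈ halfPlane (α / 2)) (h₂ : 0 ≤ x.2) :
    x ∈ sector α := by
  rw [mem_sector_iff_cos_mul_abs_le hα, abs_of_nonneg h₂]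
  exact sub_nonneg.mp hx

theorem mem_sector_of_snd_le (hα : α ∈ Ioo 0 π) (hx : x ∈ halfPlane (π - α / 2)) (h₂ : x.2 ≤ ℓ)
    (hℓ : ℓ ≤ sin (α / 2) * R) (hR : R ^ 2 < x.1 ^ 2 + x.2 ^ 2) : x ∈ sector α := by
  rw [sector_eq_inter_halfPlane hα]
  refine ⟨?_, hx⟩
  by_contra hneg
  simp only [halfPlane, lineDist, mem_ofPred_eq, sin_pi_sub, cos_pi_sub, not_le] at hx hneg
  have hcos := cos_half_pos hα
  have hsin := sin_half_pos hα
  have hpos : 0 < x.2 := pos_of_mul_pos_right (by linarith : 0 < cos (α / 2) * x.2) hcos.le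
  have h₁ : (sin (α / 2) * x.1) ^ 2 ≤ (cos (α / 2) * x.2) ^ 2 :=
    sq_le_sq' (by linarith) (by linarith)
  have h₃ : x.2 ^ 2 ≤ (sin (α / 2) * R) ^ 2 := pow_le_pow_left₀ hpos.le (h₂.trans hℓ) 2
  nlinarith [mul_lt_mul_of_pos_left hR (sq_pos_of_pos hsin), sin_sq_add_cos_sq (α / 2)]

theorem cos_mul_lt_fst_of_mem_sector (hα : α ∈ Ioo 0 π) (hx : x ∈ sector α)
    (hR : R ^ 2 < x.1 ^ 2 + x.2 ^ 2) : cos (α / 2) * R < x.1 := by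
  rw [mem_sector_iff_cos_mul_abs_le hα] at hx
  have hcos := cos_half_pos hα
  have hnonneg : 0 ≤ cos (α / 2) * |x.2| := by positivity
  have hfst : 0 ≤ x.1 := nonneg_of_mul_nonneg_right (hnonneg.trans hx) (sin_half_pos hα)
  have hsq : (cos (α / 2) * x.2) ^ 2 ≤ (sin (α / 2) * x.1) ^ 2 := by
    rw [mul_pow, ← sq_abs x.2, ← mul_pow]
    exact pow_le_pow_left₀ hnonneg hx 2
  refine lt_of_pow_lt_pow_left₀ 2 hfst ?_
  nlinarith [mul_lt_mul_of_pos_left hR (sq_pos_of_pos hcos), sin_sq_add_cos_sq (α / 2)]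

theorem le_lineDist_of_mem_sector (hα : α ∈ Ioo 0 π) (hx : x ∈ sector α)
    (hR : R ^ 2 < x.1 ^ 2 + x.2 ^ 2) (hℓ : 0 ≤ ℓ) (h₂ : x.2 ≤ ℓ) :
    sin (α / 2) * cos (α / 2) * R - ℓ ≤ lineDist (α / 2) x := by
  have h₁ := mul_le_mul_of_nonneg_left (cos_mul_lt_fst_of_mem_sector hα hx hR).le
    (sin_half_pos hα).le
  have h₃ : cos (α / 2) * x.2 ≤ ℓ :=
    (mul_le_mul_of_nonneg_left h₂ (cos_half_pos hα).le).trans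
      (mul_le_of_le_one_left hℓ (cos_le_one _))
  unfold lineDist
  linarith

theorem polar_mem_sector_iff (hα : α ∈ Ioo 0 π) {r θ : ℝ} (hr : 0 < r) (hθ : θ ∈ Ioo (-π) π) :
    (r * cos θ, r * sin θ) ∈ sector α ↔ θ ∈ Icc (-(α / 2)) (α / 2) := by
  have hlineDist (φ : ℝ) : lineDist φ (r * cos θ, r * sin θ) = r * sin (φ - θ) := by
    rw [lineDist, sin_sub]
    ring
  rw [sector_eq_inter_halfPlane hα]
  simp only [halfPlane, mem_inter_iff, mem_ofPred_eq, hlineDist, mul_nonneg_iff_of_pos_left hr,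
    mem_Icc]
  rw [show π - α / 2 - θ = π - (α / 2 + θ) by ring, sin_pi_sub]
  obtain ⟨hα₀, hαπ⟩ := hα
  obtain ⟨hθ₁, hθ₂⟩ := hθ
  constructor
  · rintro ⟨h₁, h₂⟩
    constructor
    · by_contra! h
      exact h₂.not_gt (sin_neg_of_neg_of_neg_pi_lt (by linarith) (by linarith))
    · by_contra! h
      exact h₁.not_gt (sin_neg_of_neg_of_neg_pi_lt (by linarith) (by linarith))
  · rintro ⟨h₁, h₂⟩
    exact ⟨sin_nonneg_of_nonneg_of_le_pi (by linarith) (by linarith),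
      sin_nonneg_of_nonneg_of_le_pi (by linarith) (by linarith)⟩

end Sector

/-! ### Localization away from the vertex -/

section Localization

variable {α ε ℓ R : ℝ} {Ω : Set (ℝ × ℝ)} {ϑ : ℝ → ℝ} {u v : ℝ × ℝ → ℂ}

theorem exists_bound_deriv_smoothTransition : ∃ M, ∀ y, |deriv smoothTransition y| ≤ M := by
  have hcont : Continuous (deriv smoothTransition) :=
    (smoothTransition.contDiff (n := 1)).continuous_deriv le_rfl
  refine hcont.bounded_above_of_compact_support
    (.of_support_subset_isCompact (isCompact_Icc (a := 0) (b := 1)) fun y hy ↦ ?_)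
  by_contra hmem
  rw [mem_Icc, not_and_or, not_le, not_le] at hmem
  refine hy (hmem.elim (fun h ↦ ?_) fun h ↦ ?_)
  · refine IsLocalMin.deriv_eq_zero (.of_forall fun z ↦ ?_)
    rw [smoothTransition.zero_of_nonpos h.le]
    exact smoothTransition.nonneg z
  · refine IsLocalMax.deriv_eq_zero (.of_forall fun z ↦ ?_)
    rw [smoothTransition.one_of_one_le h.le]
    exact smoothTransition.le_one z

theorem exists_cutoff_angle (hε : 0 < ε) : ∃ ℓ > 0, ∃ ϑ : ℝ → ℝ, ContDiff ℝ ∞ ϑ ∧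
    (∀ y ≤ 0, sin (ϑ y) = 0) ∧ (∀ y, ℓ ≤ y → cos (ϑ y) = 0) ∧ ∀ y, deriv ϑ y ^ 2 ≤ ε := by
  obtain ⟨M, hM⟩ := exists_bound_deriv_smoothTransition
  have hM₀ : 0 ≤ M := (abs_nonneg _).trans (hM 0)
  obtain ⟨ℓ, hℓ, hℓε⟩ : ∃ ℓ > 0, π / 2 * (M * (1 / ℓ)) ≤ √ε := by
    refine ⟨(π / 2 * M + 1) / √ε, by positivity, ?_⟩
    rw [one_div_div, ← mul_assoc, mul_div_assoc', div_le_iff₀ (by positivity), mul_comm]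
    gcongr
    linarith
  refine ⟨ℓ, hℓ, fun y ↦ π / 2 * smoothTransition (y / ℓ),
    contDiff_const.mul (smoothTransition.contDiff.comp (by fun_prop)), fun y hy ↦ ?_,
    fun y hy ↦ ?_, fun y ↦ ?_⟩
  · simp [smoothTransition.zero_of_nonpos (div_nonpos_of_nonpos_of_nonneg hy hℓ.le)]
  · simp [smoothTransition.one_of_one_le ((one_le_div hℓ).mpr hy)]
  · have hderiv : HasDerivAt (fun y ↦ π / 2 * smoothTransition (y / ℓ))
        (π / 2 * (deriv smoothTransition (y / ℓ) * (1 / ℓ))) y :=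
      ((((smoothTransition.contDiff (n := 1)).differentiable (by simp) _).hasDerivAt.comp y
        ((hasDerivAt_id y).div_const ℓ))).const_mul _
    have habs : |deriv (fun y ↦ π / 2 * smoothTransition (y / ℓ)) y| ≤ √ε := by
      rw [hderiv.deriv, abs_mul, abs_mul, abs_of_pos pi_div_two_pos, abs_of_pos (one_div_pos.2 hℓ)]
      exact le_trans (by gcongr; exact hM _) hℓε
    rw [← sq_abs]
    exact (pow_le_pow_left₀ (abs_nonneg _) habs 2).trans_eq (sq_sqrt hε.le)

theorem tsupport_smul_subset_inter {X 𝕜 E : Type*} [TopologicalSpace X] [Zero 𝕜] [Zero E]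
    [SMulWithZero 𝕜 E] {χ : X → 𝕜} {u : X → E} {A : Set X} (hA : IsClosed A)
    (hχ : ∀ x ∉ A, χ x = 0) : tsupport (fun x ↦ χ x • u x) ⊆ A ∩ tsupport u := by
  refine subset_inter (closure_minimal (fun x hx ↦ ?_) hA) (tsupport_smul_subset_right χ u)
  by_contra hxA
  exact hx (by simp [hχ x hxA])

theorem IsTestFunction.energy2D_sin_smul_add_cos_smul_le (hu : IsTestFunction u)
    (hϑ : ContDiff ℝ ∞ ϑ) (hderiv : ∀ y, deriv ϑ y ^ 2 ≤ ε) (Ω : Set (ℝ × ℝ)) (κ φ b τ : ℝ) :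
    energy2D Ω (κ * cos φ) (κ * sin φ) b τ (fun x ↦ sin (ϑ x.2) • u x) +
        energy2D Ω (κ * cos φ) (κ * sin φ) b τ (fun x ↦ cos (ϑ x.2) • u x) ≤
      energy2D Ω (κ * cos φ) (κ * sin φ) b τ u + ε * norm2D Ω u := by
  have hϑ' : ContDiff ℝ ∞ fun x : ℝ × ℝ ↦ ϑ x.2 := hϑ.comp contDiff_snd
  have hint {v : ℝ × ℝ → ℂ} (hv : IsTestFunction v) :=
    (hv.integrable_energyDensity_landau κ φ b τ).integrableOn (s := Ω)
  have hsin := hint (hu.smul hϑ'.sin)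
  have hcos := hint (hu.smul hϑ'.cos)
  have hnorm := (hu.integrable_norm_sq (μ := volume)).const_mul ε |>.integrableOn (s := Ω)
  simp only [energy2D_eq_integral_energyDensity, norm2D]
  rw [← integral_const_mul, ← integral_add hsin hcos, ← integral_add (hint hu) hnorm]
  refine integral_mono (hsin.add hcos) ((hint hu).add hnorm) fun x ↦ ?_
  have hfderiv : HasFDerivAt (fun x : ℝ × ℝ ↦ ϑ x.2)
      (deriv ϑ x.2 • ContinuousLinearMap.snd ℝ ℝ ℝ) x :=
    ((hϑ.differentiable (by simp)) x.2).hasDerivAt.comp_hasFDerivAt x hasFDerivAt_snd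
  have hims := energyDensity_sin_smul_add_cos_smul (A := landau b)
    (V := fun y ↦ κ * lineDist φ y - τ) hfderiv.differentiableAt (hu.differentiable x)
  refine hims.le.trans ?_
  gcongr
  simpa [hfderiv.fderiv, hsNormSq] using hderiv x.2

theorem IsTestFunction.norm2D_sin_smul_add_cos_smul (hu : IsTestFunction u)
    (hϑ : ContDiff ℝ ∞ ϑ) (Ω : Set (ℝ × ℝ)) :
    norm2D Ω (fun x ↦ sin (ϑ x.2) • u x) + norm2D Ω (fun x ↦ cos (ϑ x.2) • u x) =
      norm2D Ω u := by
  have hϑ' : ContDiff ℝ ∞ fun x : ℝ × ℝ ↦ ϑ x.2 := hϑ.comp contDiff_snd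
  rw [norm2D, norm2D, ← integral_add (hu.smul hϑ'.sin).integrable_norm_sq.integrableOn
    (hu.smul hϑ'.cos).integrable_norm_sq.integrableOn]
  refine integral_congr_ae (.of_forall fun x ↦ ?_)
  simp only [norm_smul, mul_pow, norm_eq_abs, sq_abs, ← add_mul, sin_sq_add_cos_sq, one_mul]

theorem IsTestFunction.Theta0_mul_norm2D_le_energy2D_of_snd_nonneg (hv : IsTestFunction v)
    (hα : α ∈ Ioo 0 π) (γ τ : ℝ) (hsupp : tsupport v ⊆ {x | 0 ≤ x.2}) :
    Theta0 * norm2D (sector α) v ≤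
      energy2D (sector α) (sin γ * cos (α / 2)) (sin γ * sin (α / 2)) (cos γ) τ v :=
  Theta0_mul_norm2D_le_energy2D_of_subset_halfPlane hv
    ((sector_eq_inter_halfPlane hα).trans_subset inter_subset_left)
    fun _ hx ↦ mem_sector_of_snd_nonneg hα hx.2 (hsupp hx.1)

theorem IsTestFunction.mul_norm2D_le_energy2D_of_le_sq {κ φ b τ c : ℝ} (hv : IsTestFunction v)
    (hΩ : MeasurableSet Ω)
    (hc : ∀ x ∈ Ω ∩ tsupport v, c ≤ (κ * lineDist φ x - τ) ^ 2) :
    c * norm2D Ω v ≤ energy2D Ω (κ * cos φ) (κ * sin φ) b τ v := by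
  rw [norm2D, energy2D_eq_integral_energyDensity, ← integral_const_mul]
  refine setIntegral_mono_on (hv.integrable_norm_sq.const_mul c).integrableOn
    (hv.integrable_energyDensity_landau κ φ b τ).integrableOn hΩ fun x hx ↦ ?_
  by_cases hxv : x ∈ tsupport v
  · exact (mul_le_mul_of_nonneg_right (hc x ⟨hx, hxv⟩) (by positivity)).trans
      (le_add_of_nonneg_left (hsNormSq_nonneg _))
  · rw [image_eq_zero_of_notMem_tsupport hxv]
    simpa using energyDensity_nonneg

theorem IsTestFunction.Theta0_mul_norm2D_le_energy2D_of_snd_le (hv : IsTestFunction v)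
    (hα : α ∈ Ioo 0 π) {γ τ : ℝ}
    (hsupp : tsupport v ⊆ {x | x.2 ≤ ℓ ∧ R ^ 2 < x.1 ^ 2 + x.2 ^ 2}) (hℓ : 0 ≤ ℓ)
    (hℓR : ℓ ≤ sin (α / 2) * R)
    (hR : sin γ ≠ 0 → |τ| + Theta0 + 1 ≤ |sin γ| * (sin (α / 2) * cos (α / 2) * R - ℓ)) :
    Theta0 * norm2D (sector α) v ≤
      energy2D (sector α) (sin γ * cos (α / 2)) (sin γ * sin (α / 2)) (cos γ) τ v := by
  obtain hγ | hγ := eq_or_ne (sin γ) 0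
  · have h := Theta0_mul_norm2D_le_energy2D_of_subset_halfPlane (γ := γ) (τ := τ) hv
      ((sector_eq_inter_halfPlane hα).trans_subset inter_subset_right)
      fun x hx ↦ mem_sector_of_snd_le hα hx.2 (hsupp hx.1).1 hℓR (hsupp hx.1).2
    simpa [hγ] using h
  · refine hv.mul_norm2D_le_energy2D_of_le_sq (measurableSet_sector α) fun x hx ↦ ?_
    obtain ⟨hx₂, hxR⟩ := hsupp hx.2
    have hdist := le_lineDist_of_mem_sector hα hx.1 hxR hℓ hx₂
    have hpot : Theta0 + 1 ≤ |sin γ * lineDist (α / 2) x - τ| := by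
      have h₁ := abs_sub_abs_le_abs_sub (sin γ * lineDist (α / 2) x) τ
      have h₂ := mul_le_mul_of_nonneg_left (hdist.trans (le_abs_self _)) (abs_nonneg (sin γ))
      rw [abs_mul] at h₁
      linarith [hR hγ]
    rw [← sq_abs]
    nlinarith [Theta0_nonneg]

theorem exists_forall_Theta0_sub_mul_norm2D_le_energy2D (hα : α ∈ Ioo 0 π) (γ τ : ℝ)
    (hε : 0 < ε) : ∃ R > 0, ∀ u : ℝ × ℝ → ℂ, IsTestFunction u →
      tsupport u ⊆ {x | R ^ 2 < x.1 ^ 2 + x.2 ^ 2} →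
      (Theta0 - ε) * norm2D (sector α) u ≤
        energy2D (sector α) (sin γ * cos (α / 2)) (sin γ * sin (α / 2)) (cos γ) τ u := by
  have hsin := sin_half_pos hα
  have hcos := cos_half_pos hα
  obtain ⟨ℓ, hℓ, ϑ, hϑ, hϑ₀, hϑℓ, hderiv⟩ := exists_cutoff_angle hε
  have hlim : Tendsto (fun R ↦ sin (α / 2) * cos (α / 2) * R) atTop atTop :=
    tendsto_id.const_mul_atTop (mul_pos hsin hcos)
  obtain ⟨R, hR, hRℓ, hRγ⟩ := ((eventually_gt_atTop 0).and
    ((hlim.eventually_ge_atTop ℓ).and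
      (hlim.eventually_ge_atTop (ℓ + (|τ| + Theta0 + 1) / |sin γ|)))).exists
  refine ⟨R, hR, fun u hu hsupp ↦ ?_⟩
  have hϑ' : ContDiff ℝ ∞ fun x : ℝ × ℝ ↦ ϑ x.2 := hϑ.comp contDiff_snd
  have hupper := (hu.smul hϑ'.sin).Theta0_mul_norm2D_le_energy2D_of_snd_nonneg hα γ τ <|
    (tsupport_smul_subset_inter (isClosed_le continuous_const continuous_snd)
      fun x hx ↦ hϑ₀ _ (not_le.mp hx).le).trans inter_subset_left
  have hlower := (hu.smul hϑ'.cos).Theta0_mul_norm2D_le_energy2D_of_snd_le (γ := γ) (τ := τ) hα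
    ((tsupport_smul_subset_inter (isClosed_le continuous_snd continuous_const)
      fun x hx ↦ hϑℓ _ (not_le.mp hx).le).trans (inter_subset_inter_right _ hsupp)) hℓ.le
    (hRℓ.trans (mul_le_mul_of_nonneg_right
      (mul_le_of_le_one_right hsin.le (cos_le_one _)) hR.le))
    fun hγ ↦ by
      rw [← div_le_iff₀' (abs_pos.mpr hγ)]
      linarith
  have hims := hu.energy2D_sin_smul_add_cos_smul_le hϑ hderiv (sector α) (sin γ) (α / 2) (cos γ) τ
  linear_combination hims + hupper + hlower - Theta0 * hu.norm2D_sin_smul_add_cos_smul hϑ (sector α)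

end Localization

/-! ### The bottom of the essential spectrum -/

section EssentialSpectrum

variable {α L : ℝ} {Ω : Set (ℝ × ℝ)} {x : ℝ × ℝ} {u v : ℝ × ℝ → ℂ}

theorem energy2D_nonneg (Ω : Set (ℝ × ℝ)) (b₁ b₂ b₃ τ : ℝ) (u : ℝ × ℝ → ℂ) :
    0 ≤ energy2D Ω b₁ b₂ b₃ τ u :=
  integral_nonneg fun x ↦ by positivity

theorem norm2D_pos (hu : Continuous u) (hint : IntegrableOn (fun x ↦ ‖u x‖ ^ 2) Ω)
    (hx : x ∈ interior Ω) (hux : u x ≠ 0) : 0 < norm2D Ω u := by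
  rw [norm2D, setIntegral_pos_iff_support_of_nonneg_ae (.of_forall fun x ↦ by positivity) hint]
  refine (((isOpen_ne_fun hu continuous_const).inter isOpen_interior).measure_pos volume
    ⟨x, hux, hx⟩).trans_le (measure_mono (inter_subset_inter (fun y hy ↦ ?_) interior_subset))
  exact pow_ne_zero 2 (norm_ne_zero_iff.mpr hy)

theorem one_zero_mem_interior_sector (hα : α ∈ Ioo 0 π) :
    ((1, 0) : ℝ × ℝ) ∈ interior (sector α) := by
  have hopen : IsOpen {x : ℝ × ℝ | |x.2| < x.1 * tan (α / 2)} :=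
    isOpen_lt (by fun_prop) (by fun_prop)
  have hsub : {x : ℝ × ℝ | |x.2| < x.1 * tan (α / 2)} ⊆ sector α :=
    fun x (hx : |x.2| < x.1 * tan (α / 2)) ↦ hx.le
  refine interior_maximal hsub hopen ?_
  simpa using tan_pos_of_pos_of_lt_pi_div_two (half_pos hα.1) (by linarith [hα.2])

theorem lineDist_add_ray (φ : ℝ) (x : ℝ × ℝ) (L : ℝ) :
    lineDist φ (x + (L * cos φ, L * sin φ)) = lineDist φ x := by
  simp only [lineDist, Prod.fst_add, Prod.snd_add]
  ring

theorem add_ray_mem_sector (hα : α ∈ Ioo 0 π) (hL : 0 ≤ L) (hx : x ∈ sector α) :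
    x + (L * cos (α / 2), L * sin (α / 2)) ∈ sector α := by
  rw [sector_eq_inter_halfPlane hα] at hx ⊢
  refine ⟨hx.1.trans_eq (lineDist_add_ray _ x L).symm, ?_⟩
  have hx₂ := hx.2
  have hLc := mul_nonneg hL (mul_nonneg (sin_half_pos hα).le (cos_half_pos hα).le)
  simp only [halfPlane, lineDist, mem_ofPred_eq, sin_pi_sub, cos_pi_sub, Prod.fst_add,
    Prod.snd_add] at hx₂ ⊢
  linarith

/-- The translate of `v` by `p`, multiplied by the phase that makes the translation commute with
the magnetic derivative in the Landau gauge of field `b`. -/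
def magTranslate (b : ℝ) (p : ℝ × ℝ) (v : ℝ × ℝ → ℂ) (x : ℝ × ℝ) : ℂ :=
  Complex.exp (((-(b * p.2)) • x.1 : ℝ) * Complex.I) * v (x - p)

theorem norm_magTranslate (b : ℝ) (p : ℝ × ℝ) (v : ℝ × ℝ → ℂ) (x : ℝ × ℝ) :
    ‖magTranslate b p v x‖ = ‖v (x - p)‖ := by
  rw [magTranslate, norm_mul, Complex.norm_exp_ofReal_mul_I, one_mul]

theorem tsupport_magTranslate_subset (b : ℝ) (p : ℝ × ℝ) (v : ℝ × ℝ → ℂ) :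
    tsupport (magTranslate b p v) ⊆ (· - p) ⁻¹' tsupport v :=
  tsupport_mul_subset_right.trans (tsupport_comp_subset_preimage v (by fun_prop))

theorem IsTestFunction.magTranslate (hv : IsTestFunction v) (b : ℝ) (p : ℝ × ℝ) :
    IsTestFunction (magTranslate b p v) :=
  (hv.comp_homeomorph (.subRight p) (contDiff_id.sub contDiff_const)).smul
    ((Complex.ofRealCLM.contDiff.comp (contDiff_fst.const_smul _)).mul contDiff_const).cexp

theorem energyDensity_magTranslate (hv : Differentiable ℝ v) (κ φ b τ L : ℝ) (x : ℝ × ℝ) :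
    energyDensity (landau b) (fun y ↦ κ * lineDist φ y - τ)
        (magTranslate b (L * cos φ, L * sin φ) v) x =
      energyDensity (landau b) (fun y ↦ κ * lineDist φ y - τ) v (x - (L * cos φ, L * sin φ)) := by
  set p := (L * cos φ, L * sin φ)
  have hlineDist (y : ℝ × ℝ) : lineDist φ (y - p) = lineDist φ y := by
    rw [← lineDist_add_ray φ (y - p) L, sub_add_cancel]
  have hgauge : landau b x + -(b * p.2) • ContinuousLinearMap.fst ℝ ℝ ℝ =
      (landau b (x - p)).comp (.id ℝ (ℝ × ℝ)) := by
    rw [landau, landau, ContinuousLinearMap.comp_id, ← add_smul, Prod.snd_sub]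
    ring_nf
  have hT : HasFDerivAt (fun y ↦ y - p) (.id ℝ (ℝ × ℝ)) x := (hasFDerivAt_id x).sub_const p
  have hphase : HasFDerivAt (fun y : ℝ × ℝ ↦ -(b * p.2) • y.1)
      (-(b * p.2) • ContinuousLinearMap.fst ℝ ℝ ℝ) x := hasFDerivAt_fst.const_smul (-(b * p.2))
  have h := energyDensity_gauge_comp (V := fun y ↦ κ * lineDist φ y - τ) hT hphase (hv (x - p))
    hgauge fun _ ↦ rfl
  simp only [hlineDist] at h
  exact h

theorem norm2D_le_norm2D_magTranslate (hv : IsTestFunction v) (b : ℝ) {p : ℝ × ℝ}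
    (hΩ : ∀ x ∈ Ω, x + p ∈ Ω) : norm2D Ω v ≤ norm2D Ω (magTranslate b p v) := by
  have hsub : (· - p) ⁻¹' Ω ⊆ Ω := fun x hx ↦ by simpa using hΩ _ hx
  rw [norm2D, ← (measurePreserving_sub_right volume p).setIntegral_preimage_emb
    (Homeomorph.subRight p).measurableEmbedding]
  simp only [← norm_magTranslate b p v]
  exact setIntegral_mono_set (hv.magTranslate b p).integrable_norm_sq.integrableOn
    (.of_forall fun x ↦ by positivity) hsub.eventuallyLE

theorem energy2D_magTranslate_le (hv : IsTestFunction v) (Ω : Set (ℝ × ℝ)) (κ φ b τ L : ℝ) :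
    energy2D Ω (κ * cos φ) (κ * sin φ) b τ (magTranslate b (L * cos φ, L * sin φ) v) ≤
      ∫ x, energyDensity (landau b) (fun y ↦ κ * lineDist φ y - τ) v x := by
  rw [energy2D_eq_integral_energyDensity, ← integral_sub_right_eq_self
    (energyDensity (landau b) (fun y ↦ κ * lineDist φ y - τ) v) (L * cos φ, L * sin φ)]
  simp only [← energyDensity_magTranslate hv.differentiable]
  exact setIntegral_le_integral ((hv.magTranslate b _).integrable_energyDensity_landau κ φ b τ)
    (.of_forall fun x ↦ energyDensity_nonneg)

theorem exists_isTestFunction_ne_zero {E : Type*} [NormedAddCommGroup E] [NormedSpace ℝ E]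
    [HasContDiffBump E] [FiniteDimensional ℝ E] (x : E) :
    ∃ v : E → ℂ, IsTestFunction v ∧ v x ≠ 0 := by
  let f : ContDiffBump x := default
  refine ⟨fun y ↦ f y, ⟨Complex.ofRealCLM.contDiff.comp f.contDiff,
    f.hasCompactSupport.comp_left (g := ((↑) : ℝ → ℂ)) Complex.ofReal_zero⟩, ?_⟩
  simp [f.one_of_mem_closedBall (Metric.mem_closedBall_self f.rIn_pos.le)]

theorem exists_forall_exists_far_quotient_le (hα : α ∈ Ioo 0 π) (κ b τ : ℝ) :
    ∃ C, ∀ R > 0, ∃ u : ℝ × ℝ → ℂ, IsTestFunction u ∧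
      tsupport u ⊆ {x | R ^ 2 < x.1 ^ 2 + x.2 ^ 2} ∧ 0 < norm2D (sector α) u ∧
      energy2D (sector α) (κ * cos (α / 2)) (κ * sin (α / 2)) b τ u / norm2D (sector α) u ≤ C := by
  obtain ⟨v, hv, hv₁⟩ := exists_isTestFunction_ne_zero ((1, 0) : ℝ × ℝ)
  have hpos : 0 < norm2D (sector α) v := norm2D_pos hv.continuous
    hv.integrable_norm_sq.integrableOn (one_zero_mem_interior_sector hα) hv₁
  obtain ⟨ρ, hρ, hball⟩ := hv.hasCompactSupport.isCompact.isBounded.exists_pos_norm_le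
  refine ⟨(∫ x, energyDensity (landau b) (fun y ↦ κ * lineDist (α / 2) y - τ) v x) /
    norm2D (sector α) v, fun R hR ↦ ?_⟩
  have hcos := cos_half_pos hα
  have hL : 0 ≤ (R + ρ + 1) / cos (α / 2) := by positivity
  have hnorm := norm2D_le_norm2D_magTranslate hv b fun x ↦ add_ray_mem_sector (x := x) hα hL
  refine ⟨_, hv.magTranslate b _, fun x hx ↦ ?_, hpos.trans_le hnorm,
    div_le_div₀ (integral_nonneg fun x ↦ energyDensity_nonneg)
      (energy2D_magTranslate_le hv _ κ (α / 2) b τ _) hpos hnorm⟩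
  have hfst := (norm_fst_le _).trans (hball _ (tsupport_magTranslate_subset _ _ _ hx))
  rw [Prod.fst_sub, div_mul_cancel₀ _ hcos.ne', norm_eq_abs, abs_le] at hfst
  have hxR : R < x.1 := by linarith
  simp only [mem_ofPred_eq]
  nlinarith [hxR, sq_nonneg x.2]

theorem Theta0_le_sEss (hα : α ∈ Ioo 0 π) (γ τ : ℝ) :
    Theta0 ≤ sEss α (sin γ * cos (α / 2)) (sin γ * sin (α / 2)) (cos γ) τ := by
  obtain ⟨C, hC⟩ := exists_forall_exists_far_quotient_le hα (sin γ) (cos γ) τ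
  have hbdd : BddAbove {r : ℝ | ∃ R > (0 : ℝ), r =
      SigmaR α (sin γ * cos (α / 2)) (sin γ * sin (α / 2)) (cos γ) τ R} := by
    refine ⟨C, ?_⟩
    rintro _ ⟨R, hR, rfl⟩
    obtain ⟨u, hu, hsupp, hpos, hle⟩ := hC R hR
    refine le_trans (csInf_le ⟨0, ?_⟩ ⟨u, hu.contDiff, hu.hasCompactSupport, hsupp, hpos, rfl⟩) hle
    rintro _ ⟨w, -, -, -, hw, rfl⟩
    exact div_nonneg (energy2D_nonneg _ _ _ _ _ _) hw.le
  refine le_of_forall_sub_le fun ε hε ↦ ?_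
  obtain ⟨R, hR, hlower⟩ := exists_forall_Theta0_sub_mul_norm2D_le_energy2D hα γ τ hε
  obtain ⟨u, hu, hsupp, hpos, -⟩ := hC R hR
  refine le_trans ?_ (le_csSup hbdd ⟨R, hR, rfl⟩)
  refine le_csInf ⟨_, u, hu.contDiff, hu.hasCompactSupport, hsupp, hpos, rfl⟩ ?_
  rintro _ ⟨w, hw, hwc, hwsupp, hwpos, rfl⟩
  exact (le_div_iff₀ hwpos).mpr (hlower w ⟨hw, hwc⟩ hwsupp)

end EssentialSpectrum

/-! ### Trial functions without compact support -/

section Cutoff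

variable {E : Type*} [NormedAddCommGroup E] [NormedSpace ℝ E]

/-- A sequence of uniformly Lipschitz test functions with values in `[-1, 1]` that are eventually
equal to `1` around every point. Multiplying by it truncates a function to a test function. -/
structure IsCutoffSeq (χ : ℕ → E → ℝ) : Prop where
  isTestFunction (n : ℕ) : IsTestFunction (χ n)
  sq_le_one (n : ℕ) (x : E) : χ n x ^ 2 ≤ 1
  exists_norm_fderiv_le : ∃ C, ∀ n x, ‖fderiv ℝ (χ n) x‖ ≤ C
  eventually_eventuallyEq_one (x : E) : ∀ᶠ n in atTop, χ n =ᶠ[nhds x] 1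

theorem exists_isCutoffSeq [FiniteDimensional ℝ E] [HasContDiffBump E] :
    ∃ χ : ℕ → E → ℝ, IsCutoffSeq χ := by
  let f : ContDiffBump (0 : E) := default
  let c (n : ℕ) : ℝ := (n + 1 : ℝ)⁻¹
  have hc (n : ℕ) : 0 < c n := by positivity
  obtain ⟨C, hC⟩ := (f.contDiff.continuous_fderiv one_ne_zero).bounded_above_of_compact_support
    (f.hasCompactSupport.fderiv ℝ)
  refine ⟨fun n x ↦ f (c n • x), fun n ↦ ?_, fun n x ↦ ?_, ⟨C, fun n x ↦ ?_⟩, fun x ↦ ?_⟩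
  · exact IsTestFunction.comp_homeomorph ⟨f.contDiff, f.hasCompactSupport⟩
      (.smulOfNeZero (c n) (hc n).ne') (contDiff_const_smul (c n))
  · exact pow_le_one₀ f.nonneg f.le_one
  · have hc₁ : c n ≤ 1 := inv_le_one_of_one_le₀ (by linarith [Nat.cast_nonneg (α := ℝ) n])
    rw [fderiv_comp_smul, norm_smul, norm_of_nonneg (hc n).le]
    exact (mul_le_of_le_one_left (norm_nonneg _) hc₁).trans (hC _)
  · have hlim : Tendsto (fun n ↦ c n • x) atTop (nhds 0) := by
      simpa [c] using (tendsto_one_div_add_atTop_nhds_zero_nat (𝕜 := ℝ)).smul_const x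
    filter_upwards [hlim.eventually (Metric.ball_mem_nhds 0 f.rIn_pos)] with n hn
    have hball := ((continuous_const_smul (c n)).tendsto x).eventually
      (Metric.isOpen_ball.mem_nhds hn)
    filter_upwards [hball] with y hy
    exact f.one_of_mem_closedBall (Metric.ball_subset_closedBall hy)

end Cutoff

section Approximation

variable {A : ℝ × ℝ → ℝ × ℝ →L[ℝ] ℝ} {V : ℝ × ℝ → ℝ} {Ω : Set (ℝ × ℝ)} {χ : ℕ → ℝ × ℝ → ℝ}
  {u : ℝ × ℝ → ℂ}

theorem IsCutoffSeq.isTestFunction_smul (hχ : IsCutoffSeq χ) (hu : ContDiff ℝ ∞ u) (n : ℕ) :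
    IsTestFunction fun x ↦ χ n x • u x :=
  ⟨(hχ.isTestFunction n).contDiff.smul hu, (hχ.isTestFunction n).hasCompactSupport.smul_right⟩

theorem IsCutoffSeq.eventually_smul_eventuallyEq (hχ : IsCutoffSeq χ) (u : ℝ × ℝ → ℂ)
    (x : ℝ × ℝ) : ∀ᶠ n in atTop, (fun y ↦ χ n y • u y) =ᶠ[nhds x] u := by
  filter_upwards [hχ.eventually_eventuallyEq_one x] with n hn
  filter_upwards [hn] with y hy
  rw [hy, Pi.one_apply, one_smul]

theorem IsCutoffSeq.tendsto_norm2D (hχ : IsCutoffSeq χ) (hu : ContDiff ℝ ∞ u)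
    (hint : IntegrableOn (fun x ↦ ‖u x‖ ^ 2) Ω) :
    Tendsto (fun n ↦ norm2D Ω fun x ↦ χ n x • u x) atTop (nhds (norm2D Ω u)) := by
  refine tendsto_integral_of_dominated_convergence _
    (fun n ↦ ((hχ.isTestFunction_smul hu n).continuous.norm.pow 2).aestronglyMeasurable) hint
    (fun n ↦ .of_forall fun x ↦ ?_) (.of_forall fun x ↦ ?_)
  · rw [norm_of_nonneg (by positivity), norm_smul, mul_pow, norm_eq_abs, sq_abs]
    exact mul_le_of_le_one_left (by positivity) (hχ.sq_le_one n x)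
  · refine tendsto_const_nhds.congr' ?_
    filter_upwards [hχ.eventually_smul_eventuallyEq u x] with n hn
    rw [hn.eq_of_nhds]

theorem IsCutoffSeq.tendsto_integral_energyDensity (hχ : IsCutoffSeq χ) (hA : Continuous A)
    (hV : Continuous V) (hu : ContDiff ℝ ∞ u) (henergy : IntegrableOn (energyDensity A V u) Ω)
    (hnorm : IntegrableOn (fun x ↦ ‖u x‖ ^ 2) Ω) :
    Tendsto (fun n ↦ ∫ x in Ω, energyDensity A V (fun y ↦ χ n y • u y) x) atTop
      (nhds (∫ x in Ω, energyDensity A V u x)) := by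
  obtain ⟨C, hC⟩ := hχ.exists_norm_fderiv_le
  refine tendsto_integral_of_dominated_convergence
    (fun x ↦ 2 * energyDensity A V u x + 2 * (2 * C ^ 2 * ‖u x‖ ^ 2))
    (fun n ↦ (continuous_energyDensity hA hV (hχ.isTestFunction_smul hu n).contDiff)
      |>.aestronglyMeasurable)
    ((henergy.const_mul 2).add ((hnorm.const_mul (2 * C ^ 2)).const_mul 2))
    (fun n ↦ .of_forall fun x ↦ ?_) (.of_forall fun x ↦ ?_)
  · have hD : hsNormSq (fderiv ℝ (χ n) x) ≤ 2 * C ^ 2 :=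
      (hsNormSq_le _).trans (by gcongr; exact hC n x)
    rw [norm_of_nonneg energyDensity_nonneg]
    refine (energyDensity_smul_le ((hχ.isTestFunction n).differentiable x)
      (hu.differentiable (by simp) x)).trans ?_
    gcongr
    exact mul_le_of_le_one_left energyDensity_nonneg (hχ.sq_le_one n x)
  · refine tendsto_const_nhds.congr' ?_
    filter_upwards [hχ.eventually_smul_eventuallyEq u x] with n hn
    exact (energyDensity_congr hn).symm

theorem specInf2D_nonneg (Ω : Set (ℝ × ℝ)) (b₁ b₂ b₃ τ : ℝ) : 0 ≤ specInf2D Ω b₁ b₂ b₃ τ :=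
  Real.sInf_nonneg <| by
    rintro _ ⟨u, -, -, hpos, rfl⟩
    exact div_nonneg (energy2D_nonneg _ _ _ _ _ _) hpos.le

theorem specInf2D_mul_norm2D_le_energy2D (hu : IsTestFunction u) (Ω : Set (ℝ × ℝ))
    (b₁ b₂ b₃ τ : ℝ) : specInf2D Ω b₁ b₂ b₃ τ * norm2D Ω u ≤ energy2D Ω b₁ b₂ b₃ τ u := by
  have hnorm : 0 ≤ norm2D Ω u := integral_nonneg fun x ↦ by positivity
  rcases hnorm.eq_or_lt with h | h
  · rw [← h, mul_zero]
    exact energy2D_nonneg _ _ _ _ _ _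
  · refine (le_div_iff₀ h).mp (csInf_le ⟨0, ?_⟩ ⟨u, hu.contDiff, hu.hasCompactSupport, h, rfl⟩)
    rintro _ ⟨w, -, -, hw, rfl⟩
    exact div_nonneg (energy2D_nonneg _ _ _ _ _ _) hw.le

theorem specInf2D_mul_norm2D_le_of_integrableOn (κ φ b τ : ℝ) (hu : ContDiff ℝ ∞ u)
    (henergy : IntegrableOn (energyDensity (landau b) (fun y ↦ κ * lineDist φ y - τ) u) Ω)
    (hnorm : IntegrableOn (fun x ↦ ‖u x‖ ^ 2) Ω) :
    specInf2D Ω (κ * cos φ) (κ * sin φ) b τ * norm2D Ω u ≤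
      ∫ x in Ω, energyDensity (landau b) (fun y ↦ κ * lineDist φ y - τ) u x := by
  obtain ⟨χ, hχ⟩ := exists_isCutoffSeq (E := ℝ × ℝ)
  have hV : Continuous fun y ↦ κ * lineDist φ y - τ :=
    ((continuous_lineDist φ).const_mul κ).sub continuous_const
  refine le_of_tendsto_of_tendsto' ((hχ.tendsto_norm2D hu hnorm).const_mul _)
    (hχ.tendsto_integral_energyDensity (continuous_landau b) hV hu henergy hnorm) fun n ↦ ?_
  rw [← energy2D_eq_integral_energyDensity]
  exact specInf2D_mul_norm2D_le_energy2D (hχ.isTestFunction_smul hu n) _ _ _ _ _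

end Approximation

/-! ### The Gaussian trial function -/

section Gaussian

variable {ρ : ℝ} {A : ℝ × ℝ → ℝ × ℝ →L[ℝ] ℝ} {V : ℝ × ℝ → ℝ}

/-- The radial Gaussian on the Euclidean plane, normalized so that the exponent of its square
is `-ρ|x|²`. -/
def gaussian (ρ : ℝ) (x : ℝ × ℝ) : ℂ := Real.exp (-(ρ / 2) * (x.1 ^ 2 + x.2 ^ 2))

theorem contDiff_gaussian (ρ : ℝ) : ContDiff ℝ ∞ (gaussian ρ) :=
  Complex.ofRealCLM.contDiff.comp (by fun_prop : ContDiff ℝ ∞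
    fun x : ℝ × ℝ ↦ Real.exp (-(ρ / 2) * (x.1 ^ 2 + x.2 ^ 2)))

theorem norm_gaussian_sq (ρ : ℝ) (x : ℝ × ℝ) :
    ‖gaussian ρ x‖ ^ 2 = Real.exp (-ρ * (x.1 ^ 2 + x.2 ^ 2)) := by
  rw [gaussian, Complex.norm_real, norm_of_nonneg (Real.exp_pos _).le, ← Real.exp_nat_mul]
  congr 1
  push_cast
  ring

theorem fderiv_gaussian_apply (ρ : ℝ) (x v : ℝ × ℝ) :
    fderiv ℝ (gaussian ρ) x v = ((-ρ * (x.1 * v.1 + x.2 * v.2) : ℝ) : ℂ) * gaussian ρ x := by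
  have hexponent : HasFDerivAt (fun x : ℝ × ℝ ↦ -(ρ / 2) * (x.1 ^ 2 + x.2 ^ 2)) (-ρ •
      (x.1 • ContinuousLinearMap.fst ℝ ℝ ℝ + x.2 • ContinuousLinearMap.snd ℝ ℝ ℝ)) x :=
    (((hasFDerivAt_fst.pow 2).add (hasFDerivAt_snd.pow 2)).const_mul (-(ρ / 2))).congr_fderiv <| by
      ext <;> simp <;> ring
  have h : HasFDerivAt (gaussian ρ) _ x := Complex.ofRealCLM.hasFDerivAt.comp x hexponent.exp
  simp [h.fderiv, gaussian]
  ring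

theorem energyDensity_gaussian (ρ : ℝ) (A : ℝ × ℝ → ℝ × ℝ →L[ℝ] ℝ) (V : ℝ × ℝ → ℝ) (x : ℝ × ℝ) :
    energyDensity A V (gaussian ρ) x =
      (ρ ^ 2 * (x.1 ^ 2 + x.2 ^ 2) + hsNormSq (A x) + V x ^ 2) *
        Real.exp (-ρ * (x.1 ^ 2 + x.2 ^ 2)) := by
  have hcov (v : ℝ × ℝ) : ‖covDeriv A (gaussian ρ) x v‖ ^ 2 =
      ((ρ * (x.1 * v.1 + x.2 * v.2)) ^ 2 + A x v ^ 2) * ‖gaussian ρ x‖ ^ 2 := by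
    have h : covDeriv A (gaussian ρ) x v =
        (((-ρ * (x.1 * v.1 + x.2 * v.2) : ℝ) : ℂ) + (A x v : ℝ) * Complex.I) * gaussian ρ x := by
      rw [covDeriv_apply, fderiv_gaussian_apply]
      ring
    rw [h, norm_mul, mul_pow, Complex.sq_norm, Complex.normSq_add_mul_I]
    ring
  simp only [energyDensity, hsNormSq, hcov, ← norm_gaussian_sq, norm_eq_abs, sq_abs]
  ring

theorem integrable_norm_gaussian_sq (hρ : 0 < ρ) : Integrable fun x ↦ ‖gaussian ρ x‖ ^ 2 := by
  have h := (integrable_exp_neg_mul_sq hρ).mul_prod (integrable_exp_neg_mul_sq hρ)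
  rw [← Measure.volume_eq_prod] at h
  refine h.congr (.of_forall fun x ↦ ?_)
  simp only [norm_gaussian_sq, ← Real.exp_add]
  ring_nf

theorem mul_exp_neg_mul_le (hρ : 0 < ρ) (s : ℝ) :
    s * Real.exp (-ρ * s) ≤ 2 / ρ * Real.exp (-(ρ / 2) * s) := by
  have h := Real.add_one_le_exp (ρ / 2 * s)
  have hs : s ≤ 2 / ρ * Real.exp (ρ / 2 * s) := by
    rw [div_mul_eq_mul_div, le_div_iff₀ hρ]
    linarith
  calc s * Real.exp (-ρ * s) ≤ 2 / ρ * Real.exp (ρ / 2 * s) * Real.exp (-ρ * s) := by gcongr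
    _ = 2 / ρ * Real.exp (-(ρ / 2) * s) := by
      rw [mul_assoc, ← Real.exp_add]
      ring_nf

theorem integrable_energyDensity_gaussian (hρ : 0 < ρ) (hA : Continuous A) (hV : Continuous V)
    {C : ℝ} (hC : ∀ x, hsNormSq (A x) + V x ^ 2 ≤ C * (x.1 ^ 2 + x.2 ^ 2)) :
    Integrable (energyDensity A V (gaussian ρ)) := by
  refine ((integrable_norm_gaussian_sq (half_pos hρ)).const_mul ((ρ ^ 2 + C) * (2 / ρ))).mono'
    (continuous_energyDensity hA hV (contDiff_gaussian ρ)).aestronglyMeasurable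
    (.of_forall fun x ↦ ?_)
  have hC₀ : 0 ≤ C := by
    have h := (add_nonneg (hsNormSq_nonneg (A (1, 0))) (sq_nonneg (V (1, 0)))).trans (hC (1, 0))
    norm_num at h
    exact h
  rw [norm_of_nonneg energyDensity_nonneg, energyDensity_gaussian, norm_gaussian_sq]
  have hx := hC x
  set s := x.1 ^ 2 + x.2 ^ 2
  calc (ρ ^ 2 * s + hsNormSq (A x) + V x ^ 2) * Real.exp (-ρ * s)
      ≤ (ρ ^ 2 + C) * s * Real.exp (-ρ * s) := by
        gcongr
        linarith
    _ = (ρ ^ 2 + C) * (s * Real.exp (-ρ * s)) := mul_assoc _ _ _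
    _ ≤ (ρ ^ 2 + C) * (2 / ρ * Real.exp (-(ρ / 2) * s)) := by
        gcongr _ * ?_
        exact mul_exp_neg_mul_le hρ s
    _ = (ρ ^ 2 + C) * (2 / ρ) * Real.exp (-(ρ / 2) * s) := (mul_assoc _ _ _).symm

end Gaussian

section PolarIntegrals

variable {α ρ : ℝ}

theorem setIntegral_sector_eq_mul (hα : α ∈ Ioo 0 π) {f : ℝ × ℝ → ℝ} {g h : ℝ → ℝ}
    (hf : ∀ r θ : ℝ, 0 < r → f (r * cos θ, r * sin θ) = g r * h θ) :
    ∫ x in sector α, f x = (∫ r in Ioi (0 : ℝ), r * g r) * ∫ θ in (-(α / 2))..(α / 2), h θ := by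
  rw [← integral_indicator (measurableSet_sector α), ← integral_comp_polarCoord_symm,
    intervalIntegral.integral_of_le (by linarith [hα.1]), ← integral_Icc_eq_integral_Ioc,
    ← setIntegral_prod_mul, polarCoord_target, ← Measure.volume_eq_prod]
  have hsub : Icc (-(α / 2)) (α / 2) ⊆ Ioo (-π) π := fun θ hθ ↦
    ⟨by linarith [hθ.1, hα.2, pi_pos], by linarith [hθ.2, hα.2, pi_pos]⟩
  have hpolar : ∫ p in Ioi (0 : ℝ) ×ˢ Ioo (-π) π, p.1 • (sector α).indicator f (polarCoord.symm p) =
      ∫ p in Ioi (0 : ℝ) ×ˢ Ioo (-π) π,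
        (univ ×ˢ Icc (-(α / 2)) (α / 2)).indicator (fun z ↦ z.1 * g z.1 * h z.2) p := by
    refine setIntegral_congr_fun (measurableSet_Ioi.prod measurableSet_Ioo) ?_
    rintro ⟨r, θ⟩ ⟨hr, hθ⟩
    simp only [indicator, polarCoord_symm_apply, polar_mem_sector_iff hα hr hθ, hf r θ hr,
      mem_prod, mem_univ, true_and, smul_eq_mul, mul_ite, mul_zero, mul_assoc]
  rw [hpolar, setIntegral_indicator (MeasurableSet.univ.prod measurableSet_Icc), prod_inter_prod,
    inter_univ, inter_eq_right.mpr hsub]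

theorem integral_Ioi_mul_exp_neg_mul_sq (hρ : 0 < ρ) :
    ∫ r in Ioi (0 : ℝ), r * Real.exp (-ρ * r ^ 2) = 1 / (2 * ρ) := by
  have h := integral_rpow_mul_exp_neg_mul_rpow (p := 2) (q := 1) (b := ρ)
    (by norm_num) (by norm_num) hρ
  norm_num [Real.rpow_neg_one] at h
  simp only [neg_mul]
  rw [h]
  ring

theorem integral_Ioi_mul_sq_mul_exp_neg_mul_sq (hρ : 0 < ρ) :
    ∫ r in Ioi (0 : ℝ), r * (r ^ 2 * Real.exp (-ρ * r ^ 2)) = 1 / (2 * ρ ^ 2) := by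
  have h := integral_rpow_mul_exp_neg_mul_rpow (p := 2) (q := 3) (b := ρ)
    (by norm_num) (by norm_num) hρ
  norm_num at h
  have hcube (r : ℝ) : r * (r ^ 2 * Real.exp (-ρ * r ^ 2)) = r ^ 3 * Real.exp (-(ρ * r ^ 2)) := by
    ring_nf
  simp only [hcube]
  rw [h]
  ring

theorem norm2D_sector_gaussian (hα : α ∈ Ioo 0 π) (hρ : 0 < ρ) :
    norm2D (sector α) (gaussian ρ) = α / (2 * ρ) := by
  rw [norm2D, setIntegral_sector_eq_mul hα (g := fun r ↦ Real.exp (-ρ * r ^ 2)) (h := fun _ ↦ 1),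
    integral_Ioi_mul_exp_neg_mul_sq hρ, intervalIntegral.integral_const, smul_eq_mul]
  · ring
  · intro r θ _
    rw [norm_gaussian_sq, mul_one]
    congr 2
    linear_combination r ^ 2 * sin_sq_add_cos_sq θ

theorem integral_quadratic_angle (α ρ κ b : ℝ) :
    ∫ θ in (-(α / 2))..(α / 2), (ρ ^ 2 + b ^ 2 * θ ^ 2 + κ ^ 2 * (α / 2 - θ) ^ 2) =
      ρ ^ 2 * α + b ^ 2 * (α ^ 3 / 12) + κ ^ 2 * (α ^ 3 / 3) := by
  have hderiv (θ : ℝ) : HasDerivAt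
      (fun θ ↦ ρ ^ 2 * θ + b ^ 2 * (θ ^ 3 / 3) - κ ^ 2 * ((α / 2 - θ) ^ 3 / 3))
      (ρ ^ 2 + b ^ 2 * θ ^ 2 + κ ^ 2 * (α / 2 - θ) ^ 2) θ := by
    have h₁ := (hasDerivAt_id θ).const_mul (ρ ^ 2)
    have h₂ := ((hasDerivAt_pow 3 θ).div_const 3).const_mul (b ^ 2)
    have h₃ := ((((hasDerivAt_id θ).const_sub (α / 2)).pow 3).div_const 3).const_mul (κ ^ 2)
    refine ((h₁.add h₂).sub h₃).congr_deriv ?_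
    simp
    ring
  rw [intervalIntegral.integral_eq_sub_of_hasDerivAt (fun θ _ ↦ hderiv θ)
    (Continuous.intervalIntegrable (by fun_prop) _ _)]
  ring

theorem integral_energyDensity_gaussian_le (hα : α ∈ Ioo 0 π) (hρ : 0 < ρ) (κ b : ℝ) :
    ∫ x in sector α, energyDensity (landau b) (fun y ↦ κ * lineDist (α / 2) y) (gaussian ρ) x ≤
      1 / (2 * ρ ^ 2) * (ρ ^ 2 * α + b ^ 2 * (α ^ 3 / 12) + κ ^ 2 * (α ^ 3 / 3)) := by
  rw [setIntegral_sector_eq_mul hα (g := fun r ↦ r ^ 2 * Real.exp (-ρ * r ^ 2))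
    (h := fun θ ↦ ρ ^ 2 + b ^ 2 * sin θ ^ 2 + κ ^ 2 * sin (α / 2 - θ) ^ 2),
    integral_Ioi_mul_sq_mul_exp_neg_mul_sq hρ, ← integral_quadratic_angle]
  · have sin_sq_le_sq (y : ℝ) : sin y ^ 2 ≤ y ^ 2 := sq_le_sq.mpr abs_sin_le_abs
    refine mul_le_mul_of_nonneg_left (intervalIntegral.integral_mono_on (by linarith [hα.1])
      (Continuous.intervalIntegrable (by fun_prop) _ _)
      (Continuous.intervalIntegrable (by fun_prop) _ _) fun θ _ ↦ ?_) (by positivity)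
    gcongr _ + _ * ?_ + _ * ?_ <;> exact sin_sq_le_sq _
  · intro r θ _
    have hnorm : (r * cos θ) ^ 2 + (r * sin θ) ^ 2 = r ^ 2 := by
      linear_combination r ^ 2 * sin_sq_add_cos_sq θ
    rw [energyDensity_gaussian, hsNormSq_landau, lineDist, hnorm, sin_sub]
    ring

end PolarIntegrals

/-! ### The upper bound on the band function -/

section UpperBound

variable {α ρ : ℝ}

theorem hsNormSq_landau_add_lineDist_sq_le (κ φ b : ℝ) (x : ℝ × ℝ) :
    hsNormSq (landau b x) + (κ * lineDist φ x) ^ 2 ≤ (b ^ 2 + κ ^ 2) * (x.1 ^ 2 + x.2 ^ 2) := by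
  have hdist : lineDist φ x ^ 2 ≤ x.1 ^ 2 + x.2 ^ 2 := by
    rw [lineDist]
    linear_combination (x.1 ^ 2 + x.2 ^ 2) * sin_sq_add_cos_sq φ +
      sq_nonneg (cos φ * x.1 + sin φ * x.2)
  rw [hsNormSq_landau, mul_pow, mul_pow, add_mul]
  gcongr
  exact le_add_of_nonneg_left (sq_nonneg _)

theorem bandFn_zero_le_of_pos (hα : α ∈ Ioo 0 π) (hρ : 0 < ρ) (κ b : ℝ) :
    bandFn α (κ * cos (α / 2)) (κ * sin (α / 2)) b 0 ≤
      ρ + α ^ 2 * (b ^ 2 + 4 * κ ^ 2) / (12 * ρ) := by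
  have hα₀ : 0 < α := hα.1
  have henergy : Integrable (energyDensity (landau b) (fun y ↦ κ * lineDist (α / 2) y)
      (gaussian ρ)) :=
    integrable_energyDensity_gaussian hρ (continuous_landau b)
      ((continuous_lineDist _).const_mul κ) (hsNormSq_landau_add_lineDist_sq_le κ (α / 2) b)
  have hquotient := specInf2D_mul_norm2D_le_of_integrableOn (Ω := sector α) κ (α / 2) b 0
    (contDiff_gaussian ρ) (by simpa only [sub_zero] using henergy.integrableOn)
    (integrable_norm_gaussian_sq hρ).integrableOn
  simp only [sub_zero] at hquotient
  have hle := hquotient.trans (integral_energyDensity_gaussian_le hα hρ κ b)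
  rw [norm2D_sector_gaussian hα hρ, ← le_div_iff₀ (by positivity)] at hle
  refine hle.trans_eq ?_
  field_simp
  ring

theorem bandFn_zero_le (hα : α ∈ Ioo 0 π) (γ : ℝ) :
    bandFn α (sin γ * cos (α / 2)) (sin γ * sin (α / 2)) (cos γ) 0 ≤
      α * (1 / √3 + √3 / 2 * sin γ ^ 2) := by
  have hα₀ : 0 < α := hα.1
  have hsqrt : √3 ^ 2 = 3 := sq_sqrt (by norm_num)
  set m := α * (1 / √3 + √3 / 2 * sin γ ^ 2) with hm
  have hm₀ : 0 < m := by positivity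
  have hm_sq : m ^ 2 = α ^ 2 * (1 + 3 / 2 * sin γ ^ 2) ^ 2 / 3 := by
    rw [hm]
    field_simp
    rw [hsqrt]
    ring
  have hbound : α ^ 2 * (cos γ ^ 2 + 4 * sin γ ^ 2) ≤ 3 * m ^ 2 := by
    rw [hm_sq, cos_sq']
    nlinarith [mul_nonneg (sq_nonneg α) (sq_nonneg (sin γ ^ 2))]
  calc bandFn α (sin γ * cos (α / 2)) (sin γ * sin (α / 2)) (cos γ) 0
      ≤ m / 2 + α ^ 2 * (cos γ ^ 2 + 4 * sin γ ^ 2) / (12 * (m / 2)) :=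
        bandFn_zero_le_of_pos hα (half_pos hm₀) _ _
    _ ≤ m / 2 + 3 * m ^ 2 / (12 * (m / 2)) := by gcongr
    _ = m := by
      field_simp
      ring

end UpperBound

theorem iInf_bandFn_le (α b₁ b₂ b₃ τ : ℝ) :
    ⨅ τ', bandFn α b₁ b₂ b₃ τ' ≤ bandFn α b₁ b₂ b₃ τ :=
  ciInf_le ⟨0, forall_mem_range.mpr fun τ' ↦ specInf2D_nonneg _ _ _ _ τ'⟩ τ

end MagWedge

open MagWedge in
theorem bandFn_min_lt_sEss_general (α γ : ℝ) (hα : α ∈ Ioo 0 π)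
    (hsmall : α * (1 / √3 + √3 / 2 * sin γ ^ 2) < Theta0) (τ : ℝ) :
    ⨅ τ', bandFn α (sin γ * cos (α / 2)) (sin γ * sin (α / 2)) (cos γ) τ' <
      sEss α (sin γ * cos (α / 2)) (sin γ * sin (α / 2)) (cos γ) τ :=
  calc ⨅ τ', bandFn α (sin γ * cos (α / 2)) (sin γ * sin (α / 2)) (cos γ) τ'
      ≤ bandFn α (sin γ * cos (α / 2)) (sin γ * sin (α / 2)) (cos γ) 0 := iInf_bandFn_le _ _ _ _ 0
    _ ≤ α * (1 / √3 + √3 / 2 * sin γ ^ 2) := bandFn_zero_le hα γ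
    _ < Theta0 := hsmall
    _ ≤ sEss α (sin γ * cos (α / 2)) (sin γ * sin (α / 2)) (cos γ) τ := Theta0_le_sEss hα γ τ

open MagWedge in
/-- if `α(1/√3 + (√3/2)sin²γ) < Θ₀`, any minimizing `τ*` of the band function
gives a value strictly below the bottom of the essential spectrum (hence a discrete
eigenvalue). -/
theorem bandFn_min_lt_sEss (α γ : ℝ) (hα : α ∈ Set.Ioo 0 π) (hγ : γ ∈ Set.Icc 0 (π / 2))
    (hsmall : α * (1 / Real.sqrt 3 + Real.sqrt 3 / 2 * Real.sin γ ^ 2) < Theta0) :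
    ∀ τs : ℝ,
      bandFn α (Real.sin γ * Real.cos (α / 2)) (Real.sin γ * Real.sin (α / 2)) (Real.cos γ) τs
        = (⨅ τ : ℝ, bandFn α
            (Real.sin γ * Real.cos (α / 2)) (Real.sin γ * Real.sin (α / 2)) (Real.cos γ) τ) →
      bandFn α (Real.sin γ * Real.cos (α / 2)) (Real.sin γ * Real.sin (α / 2)) (Real.cos γ) τs
        < sEss α (Real.sin γ * Real.cos (α / 2)) (Real.sin γ * Real.sin (α / 2)) (Real.cos γ) τs :=
  fun τs hτs ↦ hτs.trans_lt (bandFn_min_lt_sEss_general α γ hα hsmall τs)
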